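/- arXiv:quant-ph/0203087 — 4 statements merged into one kernel-verified Lean document; each statement's English description precedes it below -/
import Mathlib

section
/- Let ρ be a density matrix on ℂ^{dA} ⊗ ℂ^{dB} of rank at most 2, say ρ = p|v1⟩⟨v1| + (1−p)|v2⟩⟨v2| with v1, v2 orthonormal and 0 ≤ p ≤ 1. Then the I-tangle of ρ satisfies τ(ρ) = tr(ρ ρ̃) + 2 λ_min (1 − tr(ρ²)), where λ_min is the smallest eigenvalue of the real symmetric 3×3 matrix M built from the tensor T_{ijkl} = tr(γ_{ij} (γ_{kl})~). -/
open Matrix Kronecker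
open scoped ComplexOrder

noncomputable section

/-- Partial trace over the second factor. -/
def ptraceA {dA dB : ℕ} (ρ : Matrix (Fin dA × Fin dB) (Fin dA × Fin dB) ℂ) :
    Matrix (Fin dA) (Fin dA) ℂ :=
  Matrix.of fun i i' => ∑ j, ρ (i, j) (i', j)

/-- Partial trace over the first factor. -/
def ptraceB {dA dB : ℕ} (ρ : Matrix (Fin dA × Fin dB) (Fin dA × Fin dB) ℂ) :
    Matrix (Fin dB) (Fin dB) ℂ :=
  Matrix.of fun j j' => ∑ i, ρ (i, j) (i, j')

/-- The universal state inverter ρ ↦ ρ̃. -/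
def inverter {dA dB : ℕ} (ρ : Matrix (Fin dA × Fin dB) (Fin dA × Fin dB) ℂ) :
    Matrix (Fin dA × Fin dB) (Fin dA × Fin dB) ℂ :=
  (Matrix.trace ρᴴ) • (1 : Matrix (Fin dA × Fin dB) (Fin dA × Fin dB) ℂ)
    - (ptraceA ρ)ᴴ ⊗ₖ (1 : Matrix (Fin dB) (Fin dB) ℂ)
    - (1 : Matrix (Fin dA) (Fin dA) ℂ) ⊗ₖ (ptraceB ρ)ᴴ
    + ρᴴ

/-- The rank-one projector |ψ⟩⟨ψ|. -/
def outer {dA dB : ℕ} (ψ : Fin dA × Fin dB → ℂ) :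
    Matrix (Fin dA × Fin dB) (Fin dA × Fin dB) ℂ :=
  Matrix.vecMulVec ψ (star ψ)

/-- A density matrix: positive semidefinite with trace one. -/
def IsDensityMatrix {m : Type*} [Fintype m] [DecidableEq m] (ρ : Matrix m m ℂ) : Prop :=
  ρ.PosSemidef ∧ ρ.trace = 1

/-- The pure-state tangle ⟨ψ| ρ̃_ψ |ψ⟩ with ρ_ψ = |ψ⟩⟨ψ|. -/
def pureTangle {dA dB : ℕ} (ψ : Fin dA × Fin dB → ℂ) : ℝ :=
  (star ψ ⬝ᵥ (inverter (outer ψ) *ᵥ ψ)).re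

/-- The I-tangle: the infimum of Σᵢ pᵢ ⟨ψᵢ| ρ̃ᵢ |ψᵢ⟩ over pure-state decompositions of ρ. -/
def Itangle {dA dB : ℕ} (ρ : Matrix (Fin dA × Fin dB) (Fin dA × Fin dB) ℂ) : ℝ :=
  sInf { t | ∃ (n : ℕ) (p : Fin n → ℝ) (ψ : Fin n → (Fin dA × Fin dB → ℂ)),
    (∀ i, 0 < p i) ∧ (∑ i, p i = 1) ∧ (∀ i, star (ψ i) ⬝ᵥ ψ i = 1) ∧
    ρ = ∑ i, (p i : ℂ) • outer (ψ i) ∧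
    t = ∑ i, p i * pureTangle (ψ i) }


/-- γ_{ij} = |v_i⟩⟨v_j| (indices in `Fin 2`, so `0,1` stand for `1,2`). -/
def gam {dA dB : ℕ} (v : Fin 2 → (Fin dA × Fin dB → ℂ)) (i j : Fin 2) :
    Matrix (Fin dA × Fin dB) (Fin dA × Fin dB) ℂ :=
  Matrix.vecMulVec (v i) (star (v j))

/-- T_{ijkl} = tr(γ_{ij} (γ_{kl})~). -/
def Ttensor {dA dB : ℕ} (v : Fin 2 → (Fin dA × Fin dB → ℂ)) (i j k l : Fin 2) : ℂ :=
  Matrix.trace (gam v i j * inverter (gam v k l))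

/-- The real symmetric 3×3 matrix M built from the tensor T (indices shifted from
`{1,2}` in the paper to `{0,1}`). -/
def Mmat {dA dB : ℕ} (v : Fin 2 → (Fin dA × Fin dB → ℂ)) : Matrix (Fin 3) (Fin 3) ℝ :=
  let T := Ttensor v
  let M11 := (T 0 1 1 0 / 4 + T 0 0 1 1 / 2 + T 1 0 0 1 / 4).re
  let M12 := (Complex.I / 4 * T 0 1 1 0 - Complex.I / 4 * T 1 0 0 1).re
  let M13 := (T 0 0 1 0 / 4 - T 1 0 1 1 / 4 + T 0 0 0 1 / 4 - T 0 1 1 1 / 4).re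
  let M22 := (-(T 0 1 1 0 / 4) + T 0 0 1 1 / 2 - T 1 0 0 1 / 4).re
  let M23 := (Complex.I / 4 * T 0 0 1 0 - Complex.I / 4 * T 0 0 0 1
      + Complex.I / 4 * T 1 0 1 1 - Complex.I / 4 * T 0 1 1 1).re
  let M33 := (T 0 0 0 0 / 4 - T 0 0 1 1 / 2 + T 1 1 1 1 / 4).re
  !![M11, M12, M13; M12, M22, M23; M13, M23, M33]


def Qf {dA dB : ℕ} (a b c d : Fin dA × Fin dB → ℂ) : ℂ :=
  ∑ x, ∑ x', ∑ y, ∑ y', a (x,y) * star (b (x',y)) * star (c (x,y')) * d (x',y')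

lemma Qf_symm {dA dB : ℕ} (a b c d : Fin dA × Fin dB → ℂ) : Qf d b c a = Qf a c b d := by
  unfold Qf
  rw [Finset.sum_comm]
  refine Finset.sum_congr rfl fun x _ => Finset.sum_congr rfl fun x' _ => ?_
  rw [Finset.sum_comm]
  refine Finset.sum_congr rfl fun y _ => Finset.sum_congr rfl fun y' _ => ?_
  ring

lemma Qf_star {dA dB : ℕ} (a b c d : Fin dA × Fin dB → ℂ) : star (Qf a b c d) = Qf b a d c := by
  unfold Qf
  simp only [star_sum, star_mul', star_star]
  rw [Finset.sum_comm]
  refine Finset.sum_congr rfl fun x _ => Finset.sum_congr rfl fun x' _ => ?_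
  refine Finset.sum_congr rfl fun y _ => Finset.sum_congr rfl fun y' _ => ?_
  ring

lemma trace_inv {dA dB : ℕ} (a b c d : Fin dA × Fin dB → ℂ) :
    Matrix.trace (vecMulVec a (star b) * inverter (vecMulVec c (star d))) =
      (star b ⬝ᵥ a) * (star c ⬝ᵥ d) + (star b ⬝ᵥ d) * (star c ⬝ᵥ a)
        - Qf a b c d - Qf a c b d := by
  have h1 : Matrix.trace (vecMulVec a (star b) * inverter (vecMulVec c (star d))) =
      star b ⬝ᵥ (inverter (vecMulVec c (star d)) *ᵥ a) := by
    rw [vecMulVec_mul, Matrix.trace_vecMulVec, dotProduct_comm, dotProduct_mulVec]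
  have h2 : (vecMulVec c (star d))ᴴ = vecMulVec d (star c) := by
    rw [conjTranspose_vecMulVec, star_star]
  have hA : star b ⬝ᵥ (((ptraceA (vecMulVec c (star d)))ᴴ ⊗ₖ (1 : Matrix (Fin dB) (Fin dB) ℂ)) *ᵥ a)
      = Qf a b c d := by
    simp only [dotProduct, mulVec, Fintype.sum_prod_type, kroneckerMap_apply, conjTranspose_apply,
      ptraceA, of_apply, vecMulVec_apply, Pi.star_apply, Qf, one_apply, mul_ite, mul_one, mul_zero,
      ite_mul, zero_mul, Finset.sum_ite_eq, Finset.mem_univ, if_true, star_sum, star_mul', star_star,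
      Finset.mul_sum, Finset.sum_mul]
    conv_rhs => rw [Finset.sum_comm]
    refine Finset.sum_congr rfl fun x _ => ?_
    rw [Finset.sum_comm]
    refine Finset.sum_congr rfl fun x' _ => Finset.sum_congr rfl fun y _ =>
      Finset.sum_congr rfl fun y' _ => ?_
    ring
  have hB : star b ⬝ᵥ (((1 : Matrix (Fin dA) (Fin dA) ℂ) ⊗ₖ (ptraceB (vecMulVec c (star d)))ᴴ) *ᵥ a)
      = Qf a c b d := by
    simp only [dotProduct, mulVec, Fintype.sum_prod_type, kroneckerMap_apply, conjTranspose_apply,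
      ptraceB, of_apply, vecMulVec_apply, Pi.star_apply, Qf, one_apply,
      ite_mul, zero_mul, one_mul, star_sum, star_mul', star_star,
      Finset.mul_sum, Finset.sum_mul]
    refine Finset.sum_congr rfl fun x _ => ?_
    have h3 : ∀ y', (∑ x2, ∑ y, ∑ x', star (b (x, y')) *
        if x = x2 then star (c (x', y)) * d (x', y') * a (x2, y) else 0) =
        ∑ y, ∑ x', star (b (x, y')) * (star (c (x', y)) * d (x', y') * a (x, y)) := by
      intro y'
      rw [Finset.sum_eq_single x]
      · simp
      · intro z _ hz
        simp [Ne.symm hz]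
      · simp
    rw [Finset.sum_congr rfl fun y' _ => h3 y']
    rw [Finset.sum_comm]
    conv_rhs => rw [Finset.sum_comm]
    refine Finset.sum_congr rfl fun y _ => ?_
    rw [Finset.sum_comm]
    refine Finset.sum_congr rfl fun x' _ => Finset.sum_congr rfl fun y' _ => ?_
    ring
  rw [h1, inverter, add_mulVec, sub_mulVec, sub_mulVec, dotProduct_add, dotProduct_sub,
    dotProduct_sub, hA, hB, h2, Matrix.trace_vecMulVec, smul_mulVec, one_mulVec, vecMulVec_mulVec]
  simp [dotProduct_comm d, mul_comm]
  ring

section T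
variable {dA dB : ℕ} (v : Fin 2 → (Fin dA × Fin dB → ℂ)) (i j k l : Fin 2)

lemma T_eq : Ttensor v i j k l = (star (v j) ⬝ᵥ v i) * (star (v k) ⬝ᵥ v l)
    + (star (v j) ⬝ᵥ v l) * (star (v k) ⬝ᵥ v i)
    - Qf (v i) (v j) (v k) (v l) - Qf (v i) (v k) (v j) (v l) := by
  rw [Ttensor, gam, gam, trace_inv]

lemma T_jk : Ttensor v i k j l = Ttensor v i j k l := by
  rw [T_eq, T_eq]; ring

lemma T_il : Ttensor v l j k i = Ttensor v i j k l := by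
  rw [T_eq, T_eq, Qf_symm, Qf_symm (v i) (v k)]; ring

lemma T_star : star (Ttensor v i j k l) = Ttensor v j i l k := by
  rw [T_eq, T_eq]
  have hd : ∀ a b, star (star (v a) ⬝ᵥ v b) = star (v b) ⬝ᵥ v a := by
    intro a b
    rw [star_dotProduct, star_star, dotProduct_comm]
  simp only [star_sub, star_add, star_mul', Qf_star, hd]
  rw [Qf_symm (v j) (v i) (v l) (v k)]
  ring

end T

lemma inverter_add {dA dB : ℕ} (X Y : Matrix (Fin dA × Fin dB) (Fin dA × Fin dB) ℂ) :
    inverter (X + Y) = inverter X + inverter Y := by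
  have hA : ptraceA (X + Y) = ptraceA X + ptraceA Y := by
    ext; simp [ptraceA, Finset.sum_add_distrib]
  have hB : ptraceB (X + Y) = ptraceB X + ptraceB Y := by
    ext; simp [ptraceB, Finset.sum_add_distrib]
  simp only [inverter, hA, hB, conjTranspose_add, trace_add, add_smul, add_kronecker, kronecker_add]
  abel

lemma inverter_smul {dA dB : ℕ} (z : ℂ) (X : Matrix (Fin dA × Fin dB) (Fin dA × Fin dB) ℂ) :
    inverter (z • X) = star z • inverter X := by
  have hA : ptraceA (z • X) = z • ptraceA X := by
    ext; simp [ptraceA, Finset.mul_sum]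
  have hB : ptraceB (z • X) = z • ptraceB X := by
    ext; simp [ptraceB, Finset.mul_sum]
  simp only [inverter, hA, hB, conjTranspose_smul, trace_smul, smul_kronecker, kronecker_smul,
    smul_sub, smul_add, smul_smul, smul_eq_mul]

/-- Hermitian operator with Bloch coordinates. -/
def Wm {dA dB : ℕ} (v : Fin 2 → (Fin dA × Fin dB → ℂ)) (r : Fin 3 → ℝ) :
    Matrix (Fin dA × Fin dB) (Fin dA × Fin dB) ℂ :=
  (⟨(1 + r 2) / 2, 0⟩ : ℂ) • gam v 0 0 + (⟨r 0 / 2, r 1 / 2⟩ : ℂ) • gam v 0 1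
   + (⟨r 0 / 2, - r 1 / 2⟩ : ℂ) • gam v 1 0 + (⟨(1 - r 2) / 2, 0⟩ : ℂ) • gam v 1 1

lemma key {dA dB : ℕ} (v : Fin 2 → (Fin dA × Fin dB → ℂ)) :
    ∃ (c : ℝ) (b : Fin 3 → ℝ), ∀ r : Fin 3 → ℝ,
      (trace (Wm v r * inverter (Wm v r))).re = c + b ⬝ᵥ r + r ⬝ᵥ (Mmat v *ᵥ r) := by
  have e1 := T_star v 0 0 0 0
  have e2 := T_star v 1 1 1 1
  have e3 := T_star v 0 0 1 1
  have e4 := T_star v 0 1 1 0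
  have e5 := T_star v 0 0 0 1
  have e6 := T_star v 0 1 1 1
  have s1 := T_jk v 0 1 0 1
  have s2 := T_jk v 1 1 0 0
  have s3 := T_il v 1 0 1 0
  have s4 := T_il v 0 0 0 1
  have s5 := T_jk v 0 1 0 0
  have s6 := T_il v 0 1 1 1
  have s7 := T_jk v 1 1 0 1
  have hT : ∀ i j k l, trace (gam v i j * inverter (gam v k l)) = Ttensor v i j k l :=
    fun _ _ _ _ => rfl
  refine ⟨((Ttensor v 0 0 0 0).re + 2 * (Ttensor v 0 0 1 1).re + (Ttensor v 1 1 1 1).re) / 4,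
    ![(Ttensor v 0 0 0 1).re + (Ttensor v 0 1 1 1).re,
      (Ttensor v 0 0 0 1).im - (Ttensor v 0 1 1 1).im,
      ((Ttensor v 0 0 0 0).re - (Ttensor v 1 1 1 1).re) / 2], fun r => ?_⟩
  simp only [Wm, inverter_add, inverter_smul, mul_add, add_mul, trace_add, smul_mul_assoc,
    mul_smul_comm, trace_smul, hT, Mmat, smul_eq_mul]
  have q1 := congrArg Complex.im e1
  have q2 := congrArg Complex.im e2
  have q3 := congrArg Complex.im e3
  simp only [Complex.star_def, Complex.conj_im] at q1 q2 q3
  have q1' : (Ttensor v 0 0 0 0).im = 0 := by linarith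
  have q2' : (Ttensor v 1 1 1 1).im = 0 := by linarith
  have q3' : (Ttensor v 0 0 1 1).im = 0 := by linarith
  rw [← s2, ← s3, ← s1, s4, ← s5, s6, ← s7, ← e4, ← e5, ← e6]
  simp [dotProduct, mulVec, Fin.sum_univ_three, q1', q2', q3']
  ring

lemma jensen (M : Matrix (Fin 3) (Fin 3) ℝ) (hs : ∀ i j, M i j = M j i) (lam : ℝ)
    (psd : ∀ x : Fin 3 → ℝ, lam * (x ⬝ᵥ x) ≤ x ⬝ᵥ (M *ᵥ x)) (c : ℝ) (b : Fin 3 → ℝ) (n : ℕ)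
    (q : Fin n → ℝ) (R : Fin n → Fin 3 → ℝ) (r : Fin 3 → ℝ) (hq : ∀ i, 0 < q i)
    (hq1 : ∑ i, q i = 1) (hr : ∀ k, ∑ i, q i * R i k = r k) (hR : ∀ i, R i ⬝ᵥ R i = 1) :
    c + b ⬝ᵥ r + r ⬝ᵥ (M *ᵥ r) + lam * (1 - r ⬝ᵥ r) ≤
      ∑ i, q i * (c + b ⬝ᵥ R i + R i ⬝ᵥ (M *ᵥ R i)) := by
  obtain ⟨B, hB⟩ : ∃ B : Fin 3 → ℝ, B = b + (2 : ℝ) • (M *ᵥ r) - (2 * lam) • r := ⟨_, rfl⟩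
  obtain ⟨A, hA⟩ : ∃ A : ℝ, A = c + b ⬝ᵥ r + r ⬝ᵥ (M *ᵥ r) + lam * (1 - r ⬝ᵥ r) - B ⬝ᵥ r := ⟨_, rfl⟩
  have h1 : ∀ i, A + B ⬝ᵥ R i ≤ c + b ⬝ᵥ R i + R i ⬝ᵥ (M *ᵥ R i) := by
    intro i
    have h2 := psd (R i - r)
    have h3 := hR i
    rw [hA, hB]
    simp only [dotProduct, mulVec, Fin.sum_univ_three, Pi.add_apply, Pi.sub_apply, Pi.smul_apply,
      smul_eq_mul, hs 1 0, hs 2 0, hs 2 1] at h2 h3 ⊢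
    linear_combination h2 - lam * h3
  have h4 : ∑ i, q i * (A + B ⬝ᵥ R i) = A + B ⬝ᵥ r := by
    have : ∀ i, q i * (A + B ⬝ᵥ R i) = A * q i + B 0 * (q i * R i 0) + B 1 * (q i * R i 1)
        + B 2 * (q i * R i 2) := by
      intro i
      simp only [dotProduct, Fin.sum_univ_three]
      ring
    rw [Finset.sum_congr rfl fun i _ => this i]
    simp only [Finset.sum_add_distrib, ← Finset.mul_sum, hr, hq1]
    simp only [dotProduct, Fin.sum_univ_three]
    ring
  calc _ = A + B ⬝ᵥ r := by rw [hA]; ring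
    _ = ∑ i, q i * (A + B ⬝ᵥ R i) := h4.symm
    _ ≤ _ := Finset.sum_le_sum fun i _ => mul_le_mul_of_nonneg_left (h1 i) (hq i).le

lemma chord (M : Matrix (Fin 3) (Fin 3) ℝ) (hs : ∀ i j, M i j = M j i) (lam : ℝ)
    (c : ℝ) (b w r : Fin 3 → ℝ) (hw : w ≠ 0) (hM : M *ᵥ w = lam • w) (hr : r ⬝ᵥ r < 1) :
    ∃ (q : ℝ) (R S : Fin 3 → ℝ), 0 < q ∧ q < 1 ∧ R ⬝ᵥ R = 1 ∧ S ⬝ᵥ S = 1 ∧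
      (∀ k, q * R k + (1 - q) * S k = r k) ∧
      q * (c + b ⬝ᵥ R + R ⬝ᵥ (M *ᵥ R)) + (1 - q) * (c + b ⬝ᵥ S + S ⬝ᵥ (M *ᵥ S)) =
      c + b ⬝ᵥ r + r ⬝ᵥ (M *ᵥ r) + lam * (1 - r ⬝ᵥ r) := by
  have hW : 0 < w ⬝ᵥ w := by
    have h := dotProduct_star_self_pos_iff.2 hw
    simpa using h
  have hquad : ∃ t s : ℝ, t < 0 ∧ 0 < s ∧ (w ⬝ᵥ w) * t ^ 2 + 2 * t * (r ⬝ᵥ w) = 1 - r ⬝ᵥ r ∧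
      (w ⬝ᵥ w) * s ^ 2 + 2 * s * (r ⬝ᵥ w) = 1 - r ⬝ᵥ r := by
    generalize w ⬝ᵥ w = W at hW
    generalize r ⬝ᵥ w = β
    obtain ⟨κ, hκ⟩ : ∃ κ, κ = 1 - r ⬝ᵥ r := ⟨_, rfl⟩
    rw [← hκ]
    have hκ0 : 0 < κ := by rw [hκ]; linarith
    have hp : 0 < W * κ := mul_pos hW hκ0
    have hD2 : Real.sqrt (β ^ 2 + W * κ) ^ 2 = β ^ 2 + W * κ := Real.sq_sqrt (by positivity)
    have hD : |β| < Real.sqrt (β ^ 2 + W * κ) := by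
      rw [← Real.sqrt_sq_eq_abs]
      exact Real.sqrt_lt_sqrt (sq_nonneg _) (by linarith)
    generalize Real.sqrt (β ^ 2 + W * κ) = D at hD hD2
    obtain ⟨h1, h2⟩ := abs_lt.1 hD
    refine ⟨(-β - D) / W, (-β + D) / W, div_neg_of_neg_of_pos (by linarith) hW,
      div_pos (by linarith) hW, ?_, ?_⟩
    · field_simp
      linear_combination hD2
    · field_simp
      linear_combination hD2
  obtain ⟨t, s, ht, hs0, et, es⟩ := hquad
  have hst : 0 < s - t := by linarith
  have hq : s / (s - t) * t + (1 - s / (s - t)) * s = 0 := by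
    field_simp
    ring
  generalize hqq : s / (s - t) = q at hq
  have hM0 := congrFun hM 0
  have hM1 := congrFun hM 1
  have hM2 := congrFun hM 2
  simp only [dotProduct, mulVec, Fin.sum_univ_three, Pi.smul_apply,
      smul_eq_mul, hs 1 0, hs 2 0, hs 2 1] at et es hM0 hM1 hM2
  have hval : ∀ t : ℝ, (w ⬝ᵥ w) * t ^ 2 + 2 * t * (r ⬝ᵥ w) = 1 - r ⬝ᵥ r →
      c + b ⬝ᵥ (r + t • w) + (r + t • w) ⬝ᵥ (M *ᵥ (r + t • w)) =
      c + b ⬝ᵥ r + r ⬝ᵥ (M *ᵥ r) + lam * (1 - r ⬝ᵥ r) + t * (b ⬝ᵥ w) := by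
    intro t et
    simp only [dotProduct, mulVec, Fin.sum_univ_three, Pi.add_apply, Pi.smul_apply,
      smul_eq_mul, hs 1 0, hs 2 0, hs 2 1] at et ⊢
    linear_combination lam * et + (2 * t * r 0 + t ^ 2 * w 0) * hM0
      + (2 * t * r 1 + t ^ 2 * w 1) * hM1 + (2 * t * r 2 + t ^ 2 * w 2) * hM2
  refine ⟨q, r + t • w, r + s • w, ?_, ?_, ?_, ?_, ?_, ?_⟩
  · rw [← hqq]; positivity
  · rw [← hqq, div_lt_one hst]; linarith
  · simp only [dotProduct, Fin.sum_univ_three, Pi.add_apply, Pi.smul_apply, smul_eq_mul]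
    linear_combination et
  · simp only [dotProduct, Fin.sum_univ_three, Pi.add_apply, Pi.smul_apply, smul_eq_mul]
    linear_combination es
  · intro k
    simp only [Pi.add_apply, Pi.smul_apply, smul_eq_mul]
    linear_combination w k * hq
  · rw [hval t (by simp only [dotProduct, Fin.sum_univ_three]; linarith),
      hval s (by simp only [dotProduct, Fin.sum_univ_three]; linarith)]
    linear_combination (b ⬝ᵥ w) * hq

lemma psd_of_least (M : Matrix (Fin 3) (Fin 3) ℝ) (hs : ∀ i j, M i j = M j i) (lam : ℝ)
    (h : ∀ (μ : ℝ) (w : Fin 3 → ℝ), w ≠ 0 → M *ᵥ w = μ • w → lam ≤ μ) (x : Fin 3 → ℝ) :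
    lam * (x ⬝ᵥ x) ≤ x ⬝ᵥ (M *ᵥ x) := by
  have hH : (M - lam • (1 : Matrix (Fin 3) (Fin 3) ℝ)).IsHermitian := by
    ext i j
    simp [hs j i, one_apply, eq_comm]
  have hp : (M - lam • (1 : Matrix (Fin 3) (Fin 3) ℝ)).PosSemidef := by
    rw [hH.posSemidef_iff_eigenvalues_nonneg]
    intro i
    have h1 := hH.mulVec_eigenvectorBasis i
    rw [sub_mulVec, smul_mulVec, one_mulVec] at h1
    have h2 := h (hH.eigenvalues i + lam) (WithLp.ofLp (hH.eigenvectorBasis i)) ?_ ?_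
    · simpa using h2
    · intro h0
      exact hH.eigenvectorBasis.toBasis.ne_zero i (by
        rw [OrthonormalBasis.coe_toBasis]
        ext k
        exact congrFun h0 k)
    · rw [add_smul, ← h1]; simp
  have h3 := hp.dotProduct_mulVec_nonneg x
  rw [sub_mulVec, smul_mulVec, one_mulVec, dotProduct_sub, dotProduct_smul] at h3
  simp at h3
  linarith

def bloch (a c : ℂ) : Fin 3 → ℝ :=
  ![2 * (a * star c).re, 2 * (a * star c).im, Complex.normSq a - Complex.normSq c]

lemma outer_comb {dA dB : ℕ} (v : Fin 2 → (Fin dA × Fin dB → ℂ)) (a c : ℂ)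
    (h : Complex.normSq a + Complex.normSq c = 1) :
    outer (a • v 0 + c • v 1) = Wm v (bloch a c) := by
  have h1 : (⟨(1 + bloch a c 2) / 2, 0⟩ : ℂ) = a * star a := by
    rw [Complex.star_def, Complex.mul_conj]
    apply Complex.ext
    · simp [bloch]; linarith
    · simp
  have h2 : (⟨(1 - bloch a c 2) / 2, 0⟩ : ℂ) = c * star c := by
    rw [Complex.star_def, Complex.mul_conj]
    apply Complex.ext
    · simp [bloch]; linarith
    · simp
  have h3 : (⟨bloch a c 0 / 2, bloch a c 1 / 2⟩ : ℂ) = a * star c := by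
    apply Complex.ext
    · simp [bloch]
    · simp [bloch]
  have h4 : (⟨bloch a c 0 / 2, -bloch a c 1 / 2⟩ : ℂ) = c * star a := by
    apply Complex.ext
    · simp [bloch]; ring
    · simp [bloch]; ring
  rw [Wm, h1, h2, h3, h4]
  ext x y
  simp only [outer, gam, vecMulVec_apply, Matrix.add_apply, Matrix.smul_apply, Pi.add_apply,
    Pi.smul_apply, Pi.star_apply, star_add, star_mul', smul_eq_mul]
  ring

lemma bloch_unit (a c : ℂ) (h : Complex.normSq a + Complex.normSq c = 1) :
    bloch a c ⬝ᵥ bloch a c = 1 := by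
  simp only [dotProduct, Fin.sum_univ_three, bloch]
  simp [Complex.normSq_apply] at h ⊢
  linear_combination (a.re * a.re + a.im * a.im + (c.re * c.re + c.im * c.im) + 1) * h

lemma bloch_surj (r : Fin 3 → ℝ) (h : r ⬝ᵥ r = 1) :
    ∃ a c : ℂ, Complex.normSq a + Complex.normSq c = 1 ∧ bloch a c = r := by
  simp only [dotProduct, Fin.sum_univ_three] at h
  by_cases hz : r 2 = -1
  · have h0 : r 0 = 0 := by nlinarith [sq_nonneg (r 0), sq_nonneg (r 1)]
    have h1 : r 1 = 0 := by nlinarith [sq_nonneg (r 0), sq_nonneg (r 1)]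
    refine ⟨0, 1, by simp, ?_⟩
    ext k; fin_cases k <;> simp [bloch, h0, h1, hz]
  · have hz1 : 0 < 1 + r 2 := by
      have : -1 ≤ r 2 := by nlinarith [sq_nonneg (r 0), sq_nonneg (r 1)]
      rcases this.lt_or_eq with h | h
      · linarith
      · exact absurd h.symm hz
    have hs2 : Real.sqrt ((1 + r 2) / 2) ^ 2 = (1 + r 2) / 2 := Real.sq_sqrt (by positivity)
    have hs0 : 0 < Real.sqrt ((1 + r 2) / 2) := Real.sqrt_pos.2 (by positivity)
    generalize Real.sqrt ((1 + r 2) / 2) = s at hs2 hs0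
    have hc : (r 0 / (2 * s)) * (r 0 / (2 * s)) + (-r 1 / (2 * s)) * (-r 1 / (2 * s)) = (1 - r 2) / 2 := by
      field_simp
      rw [hs2]
      linear_combination h
    refine ⟨⟨s, 0⟩, ⟨r 0 / (2 * s), -r 1 / (2 * s)⟩, ?_, ?_⟩
    · simp only [Complex.normSq_apply]
      rw [hc]; linear_combination hs2
    · ext k; fin_cases k
      · simp [bloch]; field_simp
      · simp [bloch]; field_simp
      · simp only [bloch, Complex.normSq_apply, hc]
        simp
        linear_combination hs2

lemma pure_eq {dA dB : ℕ} (ψ : Fin dA × Fin dB → ℂ) :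
    pureTangle ψ = (trace (outer ψ * inverter (outer ψ))).re := by
  rw [pureTangle]
  conv_rhs => rw [outer, vecMulVec_mul, Matrix.trace_vecMulVec, dotProduct_comm,
    ← dotProduct_mulVec]
  rfl

lemma sandwich {dA dB : ℕ} (u w ψ : Fin dA × Fin dB → ℂ) :
    star u ⬝ᵥ (outer ψ *ᵥ w) = (star u ⬝ᵥ ψ) * star (star w ⬝ᵥ ψ) := by
  rw [outer, vecMulVec_mulVec, star_dotProduct w ψ, star_star]
  simp [mul_comm]

lemma sandwich_sum {dA dB n : ℕ} (u w : Fin dA × Fin dB → ℂ) (q : Fin n → ℝ)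
    (ψ : Fin n → Fin dA × Fin dB → ℂ) :
    star u ⬝ᵥ ((∑ i, (q i : ℂ) • outer (ψ i)) *ᵥ w) =
      ∑ i, (q i : ℂ) * ((star u ⬝ᵥ ψ i) * star (star w ⬝ᵥ ψ i)) := by
  rw [Matrix.sum_mulVec, dotProduct_sum]
  refine Finset.sum_congr rfl fun i _ => ?_
  rw [smul_mulVec, dotProduct_smul, sandwich, smul_eq_mul]

section main
variable {dA dB : ℕ} {p : ℝ} {v : Fin 2 → (Fin dA × Fin dB → ℂ)}

lemma comb_norm (hortho : ∀ i j, star (v i) ⬝ᵥ v j = if i = j then 1 else 0) (a c : ℂ) :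
    star (a • v 0 + c • v 1) ⬝ᵥ (a • v 0 + c • v 1) =
      ((Complex.normSq a + Complex.normSq c : ℝ) : ℂ) := by
  have h00 : star (v 0) ⬝ᵥ v 0 = 1 := by simp [hortho]
  have h01 : star (v 0) ⬝ᵥ v 1 = 0 := by simp [hortho]
  have h10 : star (v 1) ⬝ᵥ v 0 = 0 := by simp [hortho]
  have h11 : star (v 1) ⬝ᵥ v 1 = 1 := by simp [hortho]
  simp only [star_add, star_smul, add_dotProduct, dotProduct_add, smul_dotProduct, dotProduct_smul,
    h00, h01, h10, h11, smul_eq_mul, Complex.ofReal_add, ← Complex.mul_conj, Complex.star_def]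
  ring

lemma span_of (hortho : ∀ i j, star (v i) ⬝ᵥ v j = if i = j then 1 else 0)
    {n : ℕ} {q : Fin n → ℝ} {ψ : Fin n → Fin dA × Fin dB → ℂ} (hq : ∀ i, 0 < q i)
    (h : (p : ℂ) • outer (v 0) + ((1 - p : ℝ) : ℂ) • outer (v 1) = ∑ i, (q i : ℂ) • outer (ψ i))
    (i : Fin n) : ψ i = (star (v 0) ⬝ᵥ ψ i) • v 0 + (star (v 1) ⬝ᵥ ψ i) • v 1 := by
  have h00 : star (v 0) ⬝ᵥ v 0 = 1 := by simp [hortho]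
  have h01 : star (v 0) ⬝ᵥ v 1 = 0 := by simp [hortho]
  have h10 : star (v 1) ⬝ᵥ v 0 = 0 := by simp [hortho]
  have h11 : star (v 1) ⬝ᵥ v 1 = 1 := by simp [hortho]
  generalize ha : star (v 0) ⬝ᵥ ψ i = a
  generalize hc : star (v 1) ⬝ᵥ ψ i = c
  obtain ⟨x, hx⟩ : ∃ x, x = ψ i - (a • v 0 + c • v 1) := ⟨_, rfl⟩
  have hx0' : star (v 0) ⬝ᵥ x = 0 := by
    simp [hx, dotProduct_sub, dotProduct_add, dotProduct_smul, h00, h01, ha]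
  have hx1' : star (v 1) ⬝ᵥ x = 0 := by
    simp [hx, dotProduct_sub, dotProduct_add, dotProduct_smul, h10, h11, hc]
  have hx0 : star x ⬝ᵥ v 0 = 0 := by
    rw [star_dotProduct, hx0', star_zero]
  have hx1 : star x ⬝ᵥ v 1 = 0 := by
    rw [star_dotProduct, hx1', star_zero]
  have h5 := congrArg (fun m => star x ⬝ᵥ (m *ᵥ x)) h
  simp only [sandwich_sum, add_mulVec, smul_mulVec, dotProduct_add, dotProduct_smul, sandwich,
    hx0, hx1, zero_mul, smul_zero, add_zero] at h5
  have h6 : ∑ i, q i * Complex.normSq (star x ⬝ᵥ ψ i) = 0 := by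
    have := congrArg Complex.re h5.symm
    simpa [Complex.mul_conj, ← Complex.ofReal_mul, ← Complex.ofReal_sum] using this
  have h7 := (Finset.sum_eq_zero_iff_of_nonneg
    (fun i _ => mul_nonneg (hq i).le (Complex.normSq_nonneg _))).1 h6 i (Finset.mem_univ i)
  have h8 : star x ⬝ᵥ ψ i = 0 :=
    Complex.normSq_eq_zero.1 ((mul_eq_zero.1 h7).resolve_left (hq i).ne')
  have h9 : star x ⬝ᵥ x = 0 := by
    have h9' : star x ⬝ᵥ x = star x ⬝ᵥ (ψ i - (a • v 0 + c • v 1)) := by rw [← hx]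
    rw [h9', dotProduct_sub, h8, dotProduct_add, dotProduct_smul, dotProduct_smul, hx0, hx1]
    simp
  have h10 : x = 0 := dotProduct_star_self_eq_zero.1 h9
  rw [hx] at h10
  exact sub_eq_zero.1 h10

lemma rho_eq : (p : ℂ) • outer (v 0) + ((1 - p : ℝ) : ℂ) • outer (v 1) = Wm v ![0, 0, 2 * p - 1] := by
  have h1 : (⟨(1 + (2 * p - 1)) / 2, 0⟩ : ℂ) = (p : ℂ) := by
    apply Complex.ext <;> simp
  have h2 : (⟨(1 - (2 * p - 1)) / 2, 0⟩ : ℂ) = ((1 - p : ℝ) : ℂ) := by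
    apply Complex.ext
    · simp; ring
    · simp
  have h3 : (⟨0, 0⟩ : ℂ) = 0 := rfl
  simp only [Wm]
  have e0 : (![0, 0, 2 * p - 1] : Fin 3 → ℝ) 0 = 0 := rfl
  have e1 : (![0, 0, 2 * p - 1] : Fin 3 → ℝ) 1 = 0 := rfl
  have e2 : (![0, 0, 2 * p - 1] : Fin 3 → ℝ) 2 = 2 * p - 1 := rfl
  rw [e0, e1, e2, h1, h2]
  simp only [neg_zero, zero_div, h3, zero_smul, add_zero, outer, gam]

lemma trace_sq (hortho : ∀ i j, star (v i) ⬝ᵥ v j = if i = j then 1 else 0)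
    {ρ : Matrix (Fin dA × Fin dB) (Fin dA × Fin dB) ℂ}
    (hρ : ρ = (p : ℂ) • outer (v 0) + ((1 - p : ℝ) : ℂ) • outer (v 1)) :
    (trace (ρ * ρ)).re = p ^ 2 + (1 - p) ^ 2 := by
  have h00 : star (v 0) ⬝ᵥ v 0 = 1 := by simp [hortho]
  have h01 : star (v 0) ⬝ᵥ v 1 = 0 := by simp [hortho]
  have h10 : star (v 1) ⬝ᵥ v 0 = 0 := by simp [hortho]
  have h11 : star (v 1) ⬝ᵥ v 1 = 1 := by simp [hortho]
  have ht : ∀ i j, trace (outer (v i) * outer (v j)) =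
      (star (v i) ⬝ᵥ v j) * (star (v j) ⬝ᵥ v i) := by
    intro i j
    rw [outer, outer, vecMulVec_mul_vecMulVec, trace_vecMulVec, dotProduct_smul, smul_eq_mul,
      dotProduct_comm (v i)]
  rw [hρ]
  simp only [mul_add, add_mul, trace_add, smul_mul_assoc, mul_smul_comm, trace_smul, ht,
    h00, h01, h10, h11, smul_eq_mul]
  simp
  ring

end main

lemma Wm_affine {dA dB : ℕ} (v : Fin 2 → (Fin dA × Fin dB → ℂ)) (q : ℝ) (R S r : Fin 3 → ℝ)
    (h : ∀ k, q * R k + (1 - q) * S k = r k) :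
    Wm v r = (q : ℂ) • Wm v R + ((1 - q : ℝ) : ℂ) • Wm v S := by
  have h1 : (⟨(1 + r 2) / 2, 0⟩ : ℂ) = q * ⟨(1 + R 2) / 2, 0⟩ + ((1 - q : ℝ) : ℂ) * ⟨(1 + S 2) / 2, 0⟩ := by
    rw [← h 2]
    apply Complex.ext <;> simp <;> ring
  have h2 : (⟨(1 - r 2) / 2, 0⟩ : ℂ) = q * ⟨(1 - R 2) / 2, 0⟩ + ((1 - q : ℝ) : ℂ) * ⟨(1 - S 2) / 2, 0⟩ := by
    rw [← h 2]
    apply Complex.ext <;> simp <;> ring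
  have h3 : (⟨r 0 / 2, r 1 / 2⟩ : ℂ) = q * ⟨R 0 / 2, R 1 / 2⟩ + ((1 - q : ℝ) : ℂ) * ⟨S 0 / 2, S 1 / 2⟩ := by
    rw [← h 0, ← h 1]
    apply Complex.ext <;> simp <;> ring
  have h4 : (⟨r 0 / 2, -r 1 / 2⟩ : ℂ) = q * ⟨R 0 / 2, -R 1 / 2⟩ + ((1 - q : ℝ) : ℂ) * ⟨S 0 / 2, -S 1 / 2⟩ := by
    rw [← h 0, ← h 1]
    apply Complex.ext <;> simp <;> ring
  simp only [Wm, h1, h2, h3, h4]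
  module

/-- **Main theorem.** For a rank-≤2 density matrix ρ = p|v₁⟩⟨v₁| + (1−p)|v₂⟩⟨v₂| of a pair of
qudits, the I-tangle is τ(ρ) = tr(ρρ̃) + 2 λ_min (1 − tr(ρ²)), where λ_min is the smallest
eigenvalue of the real symmetric 3×3 matrix M. -/
theorem itangle_rank_two {dA dB : ℕ} (p : ℝ) (hp0 : 0 ≤ p) (hp1 : p ≤ 1)
    (v : Fin 2 → (Fin dA × Fin dB → ℂ))
    (hortho : ∀ i j, star (v i) ⬝ᵥ v j = if i = j then 1 else 0)
    (ρ : Matrix (Fin dA × Fin dB) (Fin dA × Fin dB) ℂ)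
    (hρ : ρ = (p : ℂ) • outer (v 0) + ((1 - p : ℝ) : ℂ) • outer (v 1))
    (lam : ℝ)
    (hlam : IsLeast {μ : ℝ | ∃ w : Fin 3 → ℝ, w ≠ 0 ∧ Mmat v *ᵥ w = μ • w} lam) :
    Itangle ρ = (Matrix.trace (ρ * inverter ρ)).re
      + 2 * lam * (1 - (Matrix.trace (ρ * ρ)).re) := by
  obtain ⟨c, b, hk⟩ := key v
  have hs : ∀ i j, Mmat v i j = Mmat v j i := by
    intro i j
    fin_cases i <;> fin_cases j <;> rfl
  have psd := psd_of_least (Mmat v) hs lam (fun μ w hw h => hlam.2 ⟨w, hw, h⟩)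
  obtain ⟨w, hw, hMw⟩ := hlam.1
  have h00 : star (v 0) ⬝ᵥ v 0 = 1 := by simp [hortho]
  have h01 : star (v 0) ⬝ᵥ v 1 = 0 := by simp [hortho]
  have h10 : star (v 1) ⬝ᵥ v 0 = 0 := by simp [hortho]
  have h11 : star (v 1) ⬝ᵥ v 1 = 1 := by simp [hortho]
  have hW : ρ = Wm v ![0, 0, 2 * p - 1] := hρ.trans rho_eq
  have hrr : (![0, 0, 2 * p - 1] : Fin 3 → ℝ) ⬝ᵥ ![0, 0, 2 * p - 1] = (2 * p - 1) ^ 2 := by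
    simp [dotProduct, Fin.sum_univ_three]
    ring
  have hval : (Matrix.trace (ρ * inverter ρ)).re + 2 * lam * (1 - (Matrix.trace (ρ * ρ)).re) =
      c + b ⬝ᵥ ![0, 0, 2 * p - 1] + ![0, 0, 2 * p - 1] ⬝ᵥ (Mmat v *ᵥ ![0, 0, 2 * p - 1])
        + lam * (1 - ![0, 0, 2 * p - 1] ⬝ᵥ ![0, 0, 2 * p - 1]) := by
    rw [trace_sq hortho hρ, hW, hk, hrr]
    ring
  have hpt : ∀ a d : ℂ, Complex.normSq a + Complex.normSq d = 1 →
      pureTangle (a • v 0 + d • v 1) = c + b ⬝ᵥ bloch a d + bloch a d ⬝ᵥ (Mmat v *ᵥ bloch a d) := by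
    intro a d h
    rw [pure_eq, outer_comb v a d h, hk]
  have hnorm : ∀ a d : ℂ, Complex.normSq a + Complex.normSq d = 1 →
      star (a • v 0 + d • v 1) ⬝ᵥ (a • v 0 + d • v 1) = 1 := by
    intro a d h
    rw [comb_norm hortho, h, Complex.ofReal_one]
  rw [hval]
  refine IsLeast.csInf_eq ⟨?_, ?_⟩
  · by_cases hlt : (2 * p - 1) ^ 2 < 1
    · obtain ⟨q, R, S, hq0, hq1, hR, hS, hRS, hf⟩ :=
        chord (Mmat v) hs lam c b w ![0, 0, 2 * p - 1] hw hMw (by rw [hrr]; exact hlt)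
      obtain ⟨a1, d1, hn1, rfl⟩ := bloch_surj R hR
      obtain ⟨a2, d2, hn2, rfl⟩ := bloch_surj S hS
      refine ⟨2, ![q, 1 - q], ![a1 • v 0 + d1 • v 1, a2 • v 0 + d2 • v 1], ?_, ?_, ?_, ?_, ?_⟩
      · intro i
        fin_cases i
        · exact hq0
        · exact sub_pos.2 hq1
      · simp
      · intro i
        fin_cases i
        · exact hnorm _ _ hn1
        · exact hnorm _ _ hn2
      · rw [hW, Wm_affine v q _ _ _ hRS, ← outer_comb v a1 d1 hn1, ← outer_comb v a2 d2 hn2,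
          Fin.sum_univ_two]
        rfl
      · rw [Fin.sum_univ_two, ← hf, ← hpt _ _ hn1, ← hpt _ _ hn2]
        rfl
    · have h1 : (2 * p - 1) ^ 2 = 1 := by nlinarith
      obtain ⟨a, d, hn, hb⟩ := bloch_surj ![0, 0, 2 * p - 1] (hrr.trans h1)
      refine ⟨1, fun _ => 1, fun _ => a • v 0 + d • v 1, fun _ => one_pos, by simp,
        fun _ => hnorm _ _ hn, ?_, ?_⟩
      · rw [hW, ← hb, ← outer_comb v a d hn]
        simp
      · rw [hrr, h1, ← hb, ← hpt _ _ hn]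
        simp
  · rintro t ⟨n, q, ψ, hq, hq1, hψ, hdec, rfl⟩
    have hsp := span_of hortho hq (hρ.symm.trans hdec)
    have hn : ∀ i, Complex.normSq (star (v 0) ⬝ᵥ ψ i) + Complex.normSq (star (v 1) ⬝ᵥ ψ i) = 1 := by
      intro i
      have h := hψ i
      rw [hsp i, comb_norm hortho] at h
      exact_mod_cast h
    have hpt' : ∀ i, pureTangle (ψ i) = _ := fun i =>
      (congrArg pureTangle (hsp i)).trans (hpt _ _ (hn i))
    rw [Finset.sum_congr rfl fun i _ => by rw [hpt' i]]
    have hA := congrArg (fun m => star (v 0) ⬝ᵥ (m *ᵥ v 0)) (hρ.symm.trans hdec)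
    have hD := congrArg (fun m => star (v 1) ⬝ᵥ (m *ᵥ v 1)) (hρ.symm.trans hdec)
    have hC := congrArg (fun m => star (v 0) ⬝ᵥ (m *ᵥ v 1)) (hρ.symm.trans hdec)
    simp only [sandwich_sum, add_mulVec, smul_mulVec, dotProduct_add, dotProduct_smul, sandwich,
      h00, h01, h10, h11, smul_eq_mul, star_one, star_zero, mul_one, mul_zero, zero_mul, add_zero,
      zero_add] at hA hD hC
    refine jensen (Mmat v) hs lam psd c b n q _ _ hq hq1 ?_ (fun i => bloch_unit _ _ (hn i))
    have hA' := congrArg Complex.re hA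
    have hD' := congrArg Complex.re hD
    have hCr := congrArg Complex.re hC
    have hCi := congrArg Complex.im hC
    simp only [Complex.star_def, Complex.mul_conj, ← Complex.ofReal_mul, ← Complex.ofReal_sum,
      Complex.ofReal_re] at hA' hD'
    simp only [Complex.re_sum, Complex.im_sum, Complex.re_ofReal_mul, Complex.im_ofReal_mul,
      Complex.zero_re, Complex.zero_im] at hCr hCi
    intro k
    fin_cases k
    · simp only [bloch]
      calc _ = ∑ i, 2 * (q i * ((star (v 0) ⬝ᵥ ψ i) * star (star (v 1) ⬝ᵥ ψ i)).re) :=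
            Finset.sum_congr rfl fun i _ => mul_left_comm _ _ _
        _ = 0 := by rw [← Finset.mul_sum, ← hCr, mul_zero]
    · simp only [bloch]
      calc _ = ∑ i, 2 * (q i * ((star (v 0) ⬝ᵥ ψ i) * star (star (v 1) ⬝ᵥ ψ i)).im) :=
            Finset.sum_congr rfl fun i _ => mul_left_comm _ _ _
        _ = 0 := by rw [← Finset.mul_sum, ← hCi, mul_zero]
    · simp only [bloch]
      calc _ = ∑ i, (q i * Complex.normSq (star (v 0) ⬝ᵥ ψ i)
              - q i * Complex.normSq (star (v 1) ⬝ᵥ ψ i)) :=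
            Finset.sum_congr rfl fun i _ => mul_sub _ _ _
        _ = 2 * p - 1 := by rw [Finset.sum_sub_distrib, ← hA', ← hD']; ring
end
end

section
/- Let ρ be a density matrix on ℂ² ⊗ ℂ^{d} (a qubit and a qudit) of rank at most 2. Then the entanglement of formation satisfies F(ρ) ≤ H(1/2 + (1/2)√(1 − τ(ρ))), where τ(ρ) is the I-tangle of ρ and H is the binary entropy function. -/
open Matrix Kronecker
open scoped ComplexOrder

noncomputable section

/-- Binary entropy H(y) = −y log₂ y − (1−y) log₂ (1−y) (with 0 log₂ 0 = 0, which is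
automatic since `Real.logb 2 0 = 0`). -/
def binEnt (y : ℝ) : ℝ := -(y * Real.logb 2 y) - (1 - y) * Real.logb 2 (1 - y)

/-- Von Neumann entropy S(σ) = −Σ_k λ_k log₂ λ_k of a Hermitian matrix (junk value 0
on non-Hermitian matrices). -/
def vnEntropy {n : ℕ} (σ : Matrix (Fin n) (Fin n) ℂ) : ℝ :=
  if h : σ.IsHermitian then ∑ k, -(h.eigenvalues k * Real.logb 2 (h.eigenvalues k)) else 0

/-- The entanglement E(ψ) = S(ρ_A^ψ) of a pure state. -/
def pureEnt {dA dB : ℕ} (ψ : Fin dA × Fin dB → ℂ) : ℝ :=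
  vnEntropy (ptraceA (outer ψ))

/-- The entanglement of formation: the infimum of Σᵢ pᵢ E(ψᵢ) over pure-state
decompositions of ρ. -/
def EoF {dA dB : ℕ} (ρ : Matrix (Fin dA × Fin dB) (Fin dA × Fin dB) ℂ) : ℝ :=
  sInf { t | ∃ (n : ℕ) (p : Fin n → ℝ) (ψ : Fin n → (Fin dA × Fin dB → ℂ)),
    (∀ i, 0 < p i) ∧ (∑ i, p i = 1) ∧ (∀ i, star (ψ i) ⬝ᵥ ψ i = 1) ∧
    ρ = ∑ i, (p i : ℂ) • outer (ψ i) ∧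
    t = ∑ i, p i * pureEnt (ψ i) }


theorem aux_slope {s t : ℝ} (hs : 0 < s) (hst : s ≤ t) (ht : t < 1) :
    (Real.log (1 + s) - Real.log (1 - s)) / s ≤ (Real.log (1 + t) - Real.log (1 - t)) / t := by
  have h0t : 0 < t := lt_of_lt_of_le hs hst
  have h1 := (Real.hasSum_log_sub_log_of_abs_lt_one (x := s)
    (by rw [abs_of_pos hs]; linarith)).div_const s
  have h2 := (Real.hasSum_log_sub_log_of_abs_lt_one (x := t)
    (by rw [abs_of_pos h0t]; linarith)).div_const t
  refine hasSum_le (fun k => ?_) h1 h2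
  have e : ∀ x : ℝ, 0 < x → (2 : ℝ) * (1 / (2 * k + 1)) * x ^ (2 * k + 1) / x
      = (2 : ℝ) * (1 / (2 * k + 1)) * x ^ (2 * k) := by
    intro x hx
    rw [pow_succ]
    field_simp
  rw [e s hs, e t h0t]
  gcongr

def gfun (x : ℝ) : ℝ := Real.binEntropy (1 / 2 + (1 / 2) * Real.sqrt (1 - x))

theorem gfun_cont : Continuous gfun := by
  unfold gfun
  fun_prop

theorem gfun_deriv {x : ℝ} (h0 : 0 < x) (h1 : x < 1) :
    HasDerivAt gfun ((Real.log (1 + Real.sqrt (1 - x)) - Real.log (1 - Real.sqrt (1 - x)))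
      / Real.sqrt (1 - x) / 4) x := by
  have hs : 0 < Real.sqrt (1 - x) := Real.sqrt_pos.2 (by linarith)
  have hs1 : Real.sqrt (1 - x) < 1 := by
    rw [Real.sqrt_lt' one_pos]; linarith
  have hin : HasDerivAt (fun y : ℝ => 1 / 2 + (1 / 2) * Real.sqrt (1 - y))
      ((1 / 2) * ((-1) / (2 * Real.sqrt (1 - x)))) x :=
    ((((hasDerivAt_id x).const_sub 1).sqrt (by simp; linarith)).const_mul (1 / 2)).const_add (1 / 2)
  have hb := (Real.hasDerivAt_binEntropy (p := 1 / 2 + (1 / 2) * Real.sqrt (1 - x))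
    (by positivity) (by linarith)).comp x hin
  refine hb.congr_deriv ?_
  set s := Real.sqrt (1 - x)
  have e1 : Real.log (1 - (1 / 2 + 1 / 2 * s)) = Real.log (1 - s) - Real.log 2 := by
    rw [← Real.log_div (by linarith) (by norm_num)]
    congr 1; ring
  have e2 : Real.log (1 / 2 + 1 / 2 * s) = Real.log (1 + s) - Real.log 2 := by
    rw [← Real.log_div (by linarith) (by norm_num)]
    congr 1; ring
  rw [e1, e2]
  field_simp
  ring

theorem gfun_concave : ConcaveOn ℝ (Set.Icc 0 1) gfun := by
  refine AntitoneOn.concaveOn_of_deriv (convex_Icc 0 1) gfun_cont.continuousOn ?_ ?_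
  · rw [interior_Icc]
    intro x hx
    exact (gfun_deriv hx.1 hx.2).differentiableAt.differentiableWithinAt
  · rw [interior_Icc]
    intro x hx y hy hxy
    rw [(gfun_deriv hx.1 hx.2).deriv, (gfun_deriv hy.1 hy.2).deriv]
    have := aux_slope (s := Real.sqrt (1 - y)) (t := Real.sqrt (1 - x))
      (Real.sqrt_pos.2 (by linarith [hy.2])) (Real.sqrt_le_sqrt (by linarith))
      (by rw [Real.sqrt_lt' one_pos]; linarith [hx.1])
    linarith

theorem binEnt_eq (y : ℝ) : binEnt y = Real.binEntropy y / Real.log 2 := by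
  rw [Real.binEntropy_eq_negMulLog_add_negMulLog_one_sub]
  simp only [binEnt, Real.negMulLog, Real.logb]
  ring

theorem ptraceA_outer_eq {d : ℕ} (ψ : Fin 2 × Fin d → ℂ) :
    ptraceA (outer ψ) = (Matrix.of fun i j => ψ (i, j)) * (Matrix.of fun i j => ψ (i, j))ᴴ := by
  ext i i'
  simp [ptraceA, outer, Matrix.mul_apply, Matrix.vecMulVec_apply]

theorem ptraceB_outer_sum {d : ℕ} (ψ : Fin 2 × Fin d → ℂ) :
    star ψ ⬝ᵥ (((1 : Matrix (Fin 2) (Fin 2) ℂ) ⊗ₖ (ptraceB (outer ψ))ᴴ) *ᵥ ψ)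
      = ((ptraceA (outer ψ)) * (ptraceA (outer ψ))).trace := by
  simp only [Matrix.trace, Matrix.diag, Matrix.mul_apply, ptraceA, ptraceB, outer, dotProduct,
    Matrix.mulVec, Matrix.of_apply, Matrix.vecMulVec_apply, Matrix.kroneckerMap_apply,
    Fintype.sum_prod_type, Fin.sum_univ_two, Matrix.conjTranspose_apply, Matrix.one_apply,
    Pi.star_apply, star_add, star_mul', star_star]
  simp only [Fin.isValue, if_true, one_mul, zero_ne_one, one_ne_zero, if_false, zero_mul,
    Finset.sum_const_zero, add_zero, zero_add, Finset.sum_mul, Finset.mul_sum,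
    ← Finset.sum_add_distrib]
  rw [Finset.sum_comm]
  refine Finset.sum_congr rfl fun i _ => Finset.sum_congr rfl fun j _ => ?_
  ring

theorem ptraceA_outer_sum {d : ℕ} (ψ : Fin 2 × Fin d → ℂ) :
    star ψ ⬝ᵥ (((ptraceA (outer ψ))ᴴ ⊗ₖ (1 : Matrix (Fin d) (Fin d) ℂ)) *ᵥ ψ)
      = ((ptraceA (outer ψ)) * (ptraceA (outer ψ))).trace := by
  simp only [Matrix.trace, Matrix.diag, Matrix.mul_apply, ptraceA, outer, dotProduct,
    Matrix.mulVec, Matrix.of_apply, Matrix.vecMulVec_apply, Matrix.kroneckerMap_apply,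
    Fintype.sum_prod_type, Fin.sum_univ_two, Matrix.conjTranspose_apply, Matrix.one_apply,
    Pi.star_apply, star_sum, star_mul', star_star, mul_ite, mul_one, mul_zero, ite_mul, zero_mul,
    Finset.sum_ite_eq, Finset.mem_univ, if_true]
  simp only [Finset.sum_mul_sum, Finset.mul_sum, Finset.sum_mul, mul_add,
    ← Finset.sum_add_distrib]
  refine Finset.sum_congr rfl fun i _ => Finset.sum_congr rfl fun j _ => ?_
  ring

theorem trace_ptraceA {d : ℕ} (ψ : Fin 2 × Fin d → ℂ) (h : star ψ ⬝ᵥ ψ = 1) :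
    (ptraceA (outer ψ)).trace = 1 := by
  rw [← h]
  simp [Matrix.trace, ptraceA, outer, dotProduct, Matrix.vecMulVec_apply,
    Fintype.sum_prod_type, mul_comm]

theorem pureTangle_eq {d : ℕ} (ψ : Fin 2 × Fin d → ℂ) (h : star ψ ⬝ᵥ ψ = 1) :
    pureTangle ψ = 4 * ((ptraceA (outer ψ)).det).re := by
  have ht := trace_ptraceA ψ h
  have h1 : (outer ψ)ᴴ = outer ψ := by simp [outer, Matrix.conjTranspose_vecMulVec]
  have h2 : (outer ψ).trace = 1 := by
    rw [← h, outer, Matrix.trace_vecMulVec, dotProduct_comm]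
  have h3 : outer ψ *ᵥ ψ = ψ := by
    simp [outer, Matrix.vecMulVec_mulVec, h]
  have key : star ψ ⬝ᵥ (inverter (outer ψ) *ᵥ ψ) = 4 * (ptraceA (outer ψ)).det := by
    unfold inverter
    rw [h1, h2, one_smul, Matrix.add_mulVec, Matrix.sub_mulVec, Matrix.sub_mulVec,
      dotProduct_add, dotProduct_sub, dotProduct_sub, ptraceA_outer_sum, ptraceB_outer_sum, h3,
      Matrix.one_mulVec, h]
    generalize ptraceA (outer ψ) = M at *
    rw [Matrix.trace_fin_two] at *
    rw [Matrix.det_fin_two, Matrix.mul_apply, Matrix.mul_apply, Fin.sum_univ_two, Fin.sum_univ_two]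
    linear_combination (-2 * (M 0 0 + M 1 1) - 2) * ht
  rw [pureTangle, key]
  simp

theorem pure_main {d : ℕ} (ψ : Fin 2 × Fin d → ℂ) (h : star ψ ⬝ᵥ ψ = 1) :
    pureTangle ψ ∈ Set.Icc (0 : ℝ) 1 ∧ pureEnt ψ = gfun (pureTangle ψ) / Real.log 2 := by
  have ht := trace_ptraceA ψ h
  have hτ := pureTangle_eq ψ h
  have hpsd : (ptraceA (outer ψ)).PosSemidef := by
    rw [ptraceA_outer_eq]; exact Matrix.posSemidef_self_mul_conjTranspose _
  have hH := hpsd.isHermitian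
  have n0 := hpsd.eigenvalues_nonneg 0
  have n1 := hpsd.eigenvalues_nonneg 1
  rw [hH.trace_eq_sum_eigenvalues, Fin.sum_univ_two] at ht
  rw [hH.det_eq_prod_eigenvalues, Fin.prod_univ_two] at hτ
  have hE : pureEnt ψ = ∑ k, -(hH.eigenvalues k * Real.logb 2 (hH.eigenvalues k)) := by
    unfold pureEnt vnEntropy
    rw [dif_pos hH]
  rw [Fin.sum_univ_two] at hE
  generalize hH.eigenvalues 0 = x at *
  generalize hH.eigenvalues 1 = y at *
  have hxy : x + y = 1 := by
    have := congrArg Complex.re ht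
    simpa using this
  have hτ' : pureTangle ψ = 4 * (x * y) := by rw [hτ]; simp
  have hy : y = 1 - x := by linarith
  subst hy
  refine ⟨?_, ?_⟩
  · rw [hτ']
    exact ⟨by positivity, by nlinarith [sq_nonneg (2 * x - 1)]⟩
  · have hs : Real.sqrt (1 - 4 * (x * (1 - x))) = |2 * x - 1| := by
      rw [← Real.sqrt_sq_eq_abs]; congr 1; ring
    have : pureEnt ψ = binEnt x := by rw [hE, binEnt]; ring
    rw [this, binEnt_eq, hτ', gfun, hs]
    congr 1
    rcases abs_cases (2 * x - 1) with ⟨e, _⟩ | ⟨e, _⟩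
    · rw [e]; congr 1; ring
    · rw [e, ← Real.binEntropy_one_sub]; congr 1; ring

theorem gfun_nonneg {x : ℝ} (hx : x ∈ Set.Icc (0 : ℝ) 1) : 0 ≤ gfun x := by
  have : Real.sqrt (1 - x) ≤ 1 := by
    rw [Real.sqrt_le_iff]; refine ⟨zero_le_one, ?_⟩; linarith [hx.1]
  exact Real.binEntropy_nonneg (by positivity) (by linarith)

/-- For a rank-≤2 density matrix of a qubit and a qudit, the entanglement of formation
satisfies F(ρ) ≤ H(1/2 + (1/2)√(1 − τ(ρ))). -/
theorem eof_upper_bound_rank_two {d : ℕ}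
    (ρ : Matrix (Fin 2 × Fin d) (Fin 2 × Fin d) ℂ)
    (hρ : IsDensityMatrix ρ) (hrank : ρ.rank ≤ 2) :
    EoF ρ ≤ binEnt (1 / 2 + (1 / 2) * Real.sqrt (1 - Itangle ρ)) := by
  have hl : 0 < Real.log 2 := Real.log_pos (by norm_num)
  have hg : ∀ x, binEnt (1 / 2 + (1 / 2) * Real.sqrt (1 - x)) = gfun x / Real.log 2 :=
    fun x => binEnt_eq _
  rw [hg]
  set T : Set ℝ := { t | ∃ (n : ℕ) (p : Fin n → ℝ) (ψ : Fin n → (Fin 2 × Fin d → ℂ)),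
    (∀ i, 0 < p i) ∧ (∑ i, p i = 1) ∧ (∀ i, star (ψ i) ⬝ᵥ ψ i = 1) ∧
    ρ = ∑ i, (p i : ℂ) • outer (ψ i) ∧
    t = ∑ i, p i * pureTangle (ψ i) } with hT
  have hIT : Itangle ρ = sInf T := rfl
  rw [hIT]
  rcases T.eq_empty_or_nonempty with hE | hne
  · have hEoF : EoF ρ = 0 := by
      unfold EoF
      convert Real.sInf_empty
      rw [Set.eq_empty_iff_forall_notMem]
      rintro t ⟨n, p, ψ, h1, h2, h3, h4, -⟩
      have : (∑ i, p i * pureTangle (ψ i)) ∈ T := ⟨n, p, ψ, h1, h2, h3, h4, rfl⟩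
      rw [hE] at this
      exact this
    rw [hEoF, hE, Real.sInf_empty]
    exact div_nonneg (gfun_nonneg ⟨le_rfl, zero_le_one⟩) hl.le
  · have hbT : BddBelow T := by
      refine ⟨0, ?_⟩
      rintro t ⟨n, p, ψ, h1, h2, h3, h4, rfl⟩
      exact Finset.sum_nonneg fun i _ => mul_nonneg (h1 i).le (pure_main _ (h3 i)).1.1
    have hsub : T ⊆ {x | EoF ρ ≤ gfun x / Real.log 2} := by
      rintro t ⟨n, p, ψ, h1, h2, h3, h4, rfl⟩
      have hle : EoF ρ ≤ ∑ i, p i * pureEnt (ψ i) := by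
        refine csInf_le ⟨0, ?_⟩ ⟨n, p, ψ, h1, h2, h3, h4, rfl⟩
        rintro t ⟨n, p, ψ, h1, h2, h3, h4, rfl⟩
        refine Finset.sum_nonneg fun i _ => mul_nonneg (h1 i).le ?_
        rw [(pure_main _ (h3 i)).2]
        exact div_nonneg (gfun_nonneg (pure_main _ (h3 i)).1) hl.le
      refine hle.trans ?_
      have hJ := gfun_concave.le_map_sum (t := Finset.univ) (w := p)
        (p := fun i => pureTangle (ψ i)) (fun i _ => (h1 i).le) h2
        (fun i _ => (pure_main _ (h3 i)).1)
      simp only [smul_eq_mul] at hJ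
      refine le_trans (le_of_eq ?_) (div_le_div_of_nonneg_right hJ hl.le)
      rw [Finset.sum_div]
      refine Finset.sum_congr rfl fun i _ => ?_
      rw [(pure_main _ (h3 i)).2, mul_div_assoc]
    have hcl : IsClosed {x | EoF ρ ≤ gfun x / Real.log 2} :=
      isClosed_le continuous_const (gfun_cont.div_const _)
    exact closure_minimal hsub hcl (csInf_mem_closure hne hbT)
end
end

section
/- For a pair of qubits (dA = dB = 2) and any density matrix ρ on ℂ² ⊗ ℂ², the I-tangle equals the square of the I-concurrence: τ(ρ) = C(ρ)². -/
open Matrix Kronecker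
open scoped ComplexOrder

noncomputable section

/-- The I-concurrence: the infimum of Σᵢ pᵢ √⟨ψᵢ| ρ̃ᵢ |ψᵢ⟩ over pure-state
decompositions of ρ. -/
def Iconcurrence {dA dB : ℕ} (ρ : Matrix (Fin dA × Fin dB) (Fin dA × Fin dB) ℂ) : ℝ :=
  sInf { t | ∃ (n : ℕ) (p : Fin n → ℝ) (ψ : Fin n → (Fin dA × Fin dB → ℂ)),
    (∀ i, 0 < p i) ∧ (∑ i, p i = 1) ∧ (∀ i, star (ψ i) ⬝ᵥ ψ i = 1) ∧
    ρ = ∑ i, (p i : ℂ) • outer (ψ i) ∧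
    t = ∑ i, p i * Real.sqrt (pureTangle (ψ i)) }


lemma aux_phase (a : ℂ) : ∃ e : ℂ, ‖e‖ = 1 ∧ a = ‖a‖ * e := by
  by_cases h : a = 0
  · exact ⟨1, by simp, by simp [h]⟩
  · refine ⟨a / ‖a‖, ?_, ?_⟩
    · rw [norm_div]; simp [h]
    · have : (‖a‖ : ℂ) ≠ 0 := by simpa using h
      field_simp

lemma aux_unit_mul_conj {e : ℂ} (h : ‖e‖ = 1) : e * (starRingEnd ℂ) e = 1 := by
  rw [Complex.mul_conj, Complex.normSq_eq_norm_sq, h]; simp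

lemma aux_align (a b : ℂ) : ∃ z : ℂ, ‖z‖ = 1 ∧ ‖a + z * b‖ = ‖a‖ + ‖b‖ := by
  obtain ⟨e, he, hae⟩ := aux_phase a
  obtain ⟨f, hf, hbf⟩ := aux_phase b
  refine ⟨e * (starRingEnd ℂ) f, by simp [he, hf], ?_⟩
  have : a + e * (starRingEnd ℂ) f * b = ((‖a‖ + ‖b‖ : ℝ) : ℂ) * e := by
    have h := aux_unit_mul_conj hf
    calc _ = ‖a‖ * e + e * (starRingEnd ℂ) f * (‖b‖ * f) := by rw [← hae, ← hbf]
      _ = ‖a‖ * e + e * ‖b‖ * (f * (starRingEnd ℂ) f) := by ring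
      _ = _ := by rw [h]; push_cast; ring
  rw [this, norm_mul, he, mul_one, Complex.norm_real, Real.norm_of_nonneg (by positivity)]

lemma aux_takagi_vec {E : Type*} [NormedAddCommGroup E] [InnerProductSpace ℂ E]
    [FiniteDimensional ℂ E] [Nontrivial E] (B : E →ₗ[ℂ] E →ₗ[ℂ] ℂ)
    (hB : ∀ x y, B x y = B y x) :
    ∃ x : E, ‖x‖ = 1 ∧ ∀ y, inner ℂ x y = 0 → B x y = 0 := by
  have : ProperSpace E := FiniteDimensional.proper ℂ E
  let L : E →L[ℂ] (E →L[ℂ] ℂ) :=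
    LinearMap.toContinuousLinearMap
      ((LinearMap.toContinuousLinearMap : (E →ₗ[ℂ] ℂ) ≃ₗ[ℂ] (E →L[ℂ] ℂ)).toLinearMap ∘ₗ B)
  have hL : ∀ x y, L x y = B x y := fun x y => rfl
  have hc : Continuous (fun x => ‖B x x‖) := by
    simp only [← hL]; fun_prop
  obtain ⟨x0, hx0⟩ := exists_ne (0 : E)
  have hn0 : ‖x0‖ ≠ 0 := by simpa using hx0
  have hne : (Metric.sphere (0 : E) 1).Nonempty := by
    refine ⟨((‖x0‖⁻¹ : ℝ) : ℂ) • x0, ?_⟩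
    simp [norm_smul, hn0]
  obtain ⟨x, hx, hmax⟩ := (isCompact_sphere (0 : E) 1).exists_isMaxOn hne hc.continuousOn
  have hx1 : ‖x‖ = 1 := by simpa using hx
  have hall : ∀ w, ‖B w w‖ ≤ ‖B x x‖ * ‖w‖ ^ 2 := by
    intro w
    by_cases hw : w = 0
    · simp [hw]
    have hwn : ‖w‖ ≠ 0 := by simpa using hw
    have h1 := hmax (show ((‖w‖⁻¹ : ℝ) : ℂ) • w ∈ Metric.sphere (0 : E) 1 by
      simp [norm_smul, hwn])
    simp only [Set.mem_ofPred_eq, map_smul, LinearMap.smul_apply, norm_smul] at h1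
    simp only [Complex.norm_real, norm_inv, norm_norm] at h1
    have hp : 0 < ‖w‖ := by positivity
    have : ‖w‖⁻¹ * (‖w‖⁻¹ * ‖B w w‖) = ‖B w w‖ / ‖w‖ ^ 2 := by field_simp
    rw [this, div_le_iff₀ (by positivity)] at h1
    exact h1
  refine ⟨x, hx1, fun y hxy => ?_⟩
  set m := ‖B x x‖
  set β := 2 * B x y with hβ
  obtain ⟨z, hz, hal⟩ := aux_align (B x x) β
  set K := m * ‖y‖ ^ 2 + ‖B y y‖ with hK
  have hK0 : 0 ≤ K := by positivity
  have key : ∀ t : ℝ, 0 < t → t * ‖β‖ ≤ t ^ 2 * K := by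
    intro t ht
    obtain ⟨z, hz, hal⟩ := aux_align (B x x) (t * β)
    have h1 := hall (x + (z * t) • y)
    have h2 : ‖x + (z * t) • y‖ ^ 2 = 1 + t ^ 2 * ‖y‖ ^ 2 := by
      have := norm_add_sq_eq_norm_sq_add_norm_sq_of_inner_eq_zero (𝕜 := ℂ) x ((z * t) • y)
        (by rw [inner_smul_right, hxy, mul_zero])
      rw [sq, this, norm_smul, norm_mul, hz, hx1, Complex.norm_real, Real.norm_of_nonneg ht.le]
      ring
    have h3 : B (x + (z * t) • y) (x + (z * t) • y) =
        (B x x + z * (t * β)) + (z * t) ^ 2 * B y y := by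
      simp only [map_add, map_smul, LinearMap.add_apply, LinearMap.smul_apply, smul_eq_mul]
      rw [hB y x, hβ]; ring
    have h4 : ‖B x x + z * (t * β)‖ ≤
        ‖B (x + (z * t) • y) (x + (z * t) • y)‖ + t ^ 2 * ‖B y y‖ := by
      have : B x x + z * (t * β) = B (x + (z * t) • y) (x + (z * t) • y)
        - (z * t) ^ 2 * B y y := by rw [h3]; ring
      rw [this]
      refine (norm_sub_le _ _).trans (le_of_eq ?_)
      rw [norm_mul, norm_pow, norm_mul, hz, Complex.norm_real, Real.norm_of_nonneg ht.le, one_mul]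
    rw [hal, norm_mul, Complex.norm_real, Real.norm_of_nonneg ht.le] at h4
    rw [h2] at h1
    rw [hK]
    nlinarith
  by_contra hne
  have hb : 0 < ‖β‖ := by
    rw [norm_pos_iff, hβ]; simpa using hne
  have := key (‖β‖ / (K + 1)) (by positivity)
  have h5 : ‖β‖ / (K + 1) * ‖β‖ = (‖β‖ / (K + 1)) ^ 2 * (K + 1) := by field_simp
  have h6 : 0 < (‖β‖ / (K + 1)) ^ 2 := by positivity
  nlinarith

lemma aux_takagi (n : ℕ) : ∀ (E : Type) [NormedAddCommGroup E] [InnerProductSpace ℂ E]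
    [FiniteDimensional ℂ E] (_ : Module.finrank ℂ E = n) (B : E →ₗ[ℂ] E →ₗ[ℂ] ℂ)
    (_ : ∀ x y, B x y = B y x),
    ∃ u : Fin n → E, Orthonormal ℂ u ∧ ∀ i j, i ≠ j → B (u i) (u j) = 0 := by
  induction n with
  | zero =>
    intro E _ _ _ h B hB
    exact ⟨fun i => i.elim0, ⟨fun i => i.elim0, fun i => i.elim0⟩, fun i => i.elim0⟩
  | succ n ih =>
    intro E _ _ _ h B hB
    have : Nontrivial E := Module.nontrivial_of_finrank_pos (R := ℂ) (by omega)
    obtain ⟨x, hx, hxB⟩ := aux_takagi_vec B hB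
    have hx0 : x ≠ 0 := by rintro rfl; simp at hx
    have : Fact (Module.finrank ℂ E = n + 1) := ⟨h⟩
    obtain ⟨u, hu, huB⟩ := ih (ℂ ∙ x)ᗮ (Submodule.finrank_orthogonal_span_singleton hx0)
      ((B.domRestrict (ℂ ∙ x)ᗮ).compl₂ (ℂ ∙ x)ᗮ.subtype) (fun a b => hB _ _)
    have hux : ∀ i, inner ℂ x (u i : E) = 0 := fun i =>
      Submodule.mem_orthogonal_singleton_iff_inner_right.1 (u i).2
    have hux' : ∀ i, inner ℂ (u i : E) x = 0 := fun i => inner_eq_zero_symm.1 (hux i)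
    refine ⟨Fin.cons x (fun i => (u i : E)), ⟨?_, ?_⟩, ?_⟩
    · intro i
      refine Fin.cases ?_ (fun i => ?_) i
      · simpa using hx
      · simpa using hu.1 i
    · intro i j
      refine Fin.cases ?_ (fun i => ?_) i <;> refine Fin.cases ?_ (fun j => ?_) j
      · intro h; exact absurd rfl h
      · intro _; simpa using hux j
      · intro _; simpa using hux' i
      · intro h
        have := hu.2 (fun hh => h (congrArg Fin.succ hh) : i ≠ j)
        simpa using this
    · intro i j
      refine Fin.cases ?_ (fun i => ?_) i <;> refine Fin.cases ?_ (fun j => ?_) j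
      · intro h; exact absurd rfl h
      · intro _; simpa using hxB _ (hux j)
      · intro _; simpa using (hB _ _).trans (hxB _ (hux i))
      · intro h
        have := huB i j (fun hh => h (congrArg Fin.succ hh))
        simpa using this

lemma aux_triangle (x y s : ℝ) (hx : 0 ≤ x) (hy : 0 ≤ y) (h1 : |x - y| ≤ s) (h2 : s ≤ x + y) :
    ∃ u v : ℂ, ‖u‖ = 1 ∧ ‖v‖ = 1 ∧ u * x + v * y = s := by
  have hc : Continuous (fun θ : ℝ => ‖(x : ℂ) + Complex.exp (θ * Complex.I) * y‖) := by fun_prop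
  have := intermediate_value_Icc' Real.pi_pos.le hc.continuousOn
  have hs : s ∈ Set.Icc ‖(x : ℂ) + Complex.exp (Real.pi * Complex.I) * y‖
      ‖(x : ℂ) + Complex.exp ((0 : ℝ) * Complex.I) * y‖ := by
    constructor
    · rw [Complex.exp_pi_mul_I]
      have : (x : ℂ) + -1 * y = ((x - y : ℝ) : ℂ) := by push_cast; ring
      rw [this, Complex.norm_real]; exact h1
    · have : (x : ℂ) + Complex.exp ((0 : ℝ) * Complex.I) * y = ((x + y : ℝ) : ℂ) := by simp
      rw [this, Complex.norm_real]; exact h2.trans (le_abs_self _)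
  obtain ⟨θ, -, hθ⟩ := this hs
  simp only at hθ
  obtain ⟨e, he, hw⟩ := aux_phase ((x : ℂ) + Complex.exp (θ * Complex.I) * y)
  rw [hθ] at hw
  refine ⟨(starRingEnd ℂ) e, (starRingEnd ℂ) e * Complex.exp (θ * Complex.I), by simpa using he,
    by simp [he, Complex.norm_exp_ofReal_mul_I], ?_⟩
  calc _ = (starRingEnd ℂ) e * ((x : ℂ) + Complex.exp (θ * Complex.I) * y) := by ring
    _ = s * (e * (starRingEnd ℂ) e) := by rw [hw]; ring
    _ = s := by rw [aux_unit_mul_conj he, mul_one]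

lemma aux_polygon (l : Fin 4 → ℝ) (h0 : ∀ i, 0 ≤ l i)
    (h : ∀ i, l i ≤ ∑ j, l j - l i) :
    ∃ u : Fin 4 → ℂ, (∀ i, ‖u i‖ = 1) ∧ ∑ i, u i * l i = 0 := by
  simp only [Fin.sum_univ_four] at *
  have a0 := h0 0; have a1 := h0 1; have a2 := h0 2; have a3 := h0 3
  have b0 := h 0; have b1 := h 1; have b2 := h 2; have b3 := h 3
  obtain ⟨u, v, hu, hv, huv⟩ := aux_triangle (l 0) (l 1) (max |l 0 - l 1| |l 2 - l 3|) a0 a1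
    (le_max_left _ _) (by
      refine max_le ?_ ?_ <;> rw [abs_le] <;> constructor <;> linarith)
  obtain ⟨u', v', hu', hv', huv'⟩ := aux_triangle (l 2) (l 3) (max |l 0 - l 1| |l 2 - l 3|) a2 a3
    (le_max_right _ _) (by
      refine max_le ?_ ?_ <;> rw [abs_le] <;> constructor <;> linarith)
  refine ⟨![u, v, -u', -v'], ?_, ?_⟩
  · intro i; fin_cases i <;> simp [hu, hv, hu', hv']
  · simp only [Matrix.cons_val]
    linear_combination huv - huv'

lemma aux_zero_diag {ι : Type*} [Fintype ι] [DecidableEq ι] (M : ι → ι → ℝ)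
    (hM : ∑ i, M i i = 0) :
    ∃ w : ι → ι → ℝ, (∀ a b, ∑ k, w k a * w k b = if a = b then 1 else 0) ∧
      ∀ k, ∑ a, ∑ b, w k a * w k b * M a b = 0 := by
  let r : (ι → ℝ) → ℝ := fun x => ∑ a, ∑ b, x a * x b * M a b
  have main : ∀ n : ℕ, ∀ w : ι → ι → ℝ,
      (∀ a b, ∑ k, w k a * w k b = if a = b then 1 else 0) →
      (Finset.univ.filter (fun k => r (w k) ≠ 0)).card ≤ n →
      ∃ w : ι → ι → ℝ, (∀ a b, ∑ k, w k a * w k b = if a = b then 1 else 0) ∧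
        ∀ k, r (w k) = 0 := by
    intro n
    induction n with
    | zero =>
      intro w hw hc
      refine ⟨w, hw, fun k => ?_⟩
      by_contra hk
      have : k ∈ (Finset.univ.filter (fun k => r (w k) ≠ 0)) := by simp [hk]
      have := Finset.card_pos.2 ⟨k, this⟩
      omega
    | succ n ih =>
      intro w hw hc
      by_cases hz : ∀ k, r (w k) = 0
      · exact ⟨w, hw, hz⟩
      have hsum : ∑ k, r (w k) = 0 := by
        simp only [r]
        rw [Finset.sum_comm]
        calc _ = ∑ a, ∑ b, (∑ k, w k a * w k b) * M a b := by
              refine Finset.sum_congr rfl fun a _ => ?_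
              rw [Finset.sum_comm]
              simp only [Finset.sum_mul]
          _ = 0 := by simp [hw, hM]
      push Not at hz
      obtain ⟨k0, hk0⟩ := hz
      obtain ⟨i, -, hi⟩ := Finset.exists_pos_of_sum_zero_of_exists_nonzero _ hsum
        ⟨k0, Finset.mem_univ _, hk0⟩
      obtain ⟨j, -, hj⟩ := Finset.exists_pos_of_sum_zero_of_exists_nonzero (s := Finset.univ)
        (fun k => - r (w k)) (by simp [hsum]) ⟨k0, Finset.mem_univ _, by simpa using hk0⟩
      have hj' : r (w j) < 0 := by simpa using hj
      have hij : i ≠ j := by rintro rfl; linarith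
      have hcont : Continuous (fun θ : ℝ =>
          r (fun a => Real.cos θ * w i a + Real.sin θ * w j a)) := by
        simp only [r]; fun_prop
      have hiv := intermediate_value_Icc' (show (0 : ℝ) ≤ Real.pi / 2 by positivity)
        hcont.continuousOn
      obtain ⟨θ, -, hθ⟩ := hiv (show (0 : ℝ) ∈ _ by
        simp only [Real.cos_zero, Real.sin_zero, Real.cos_pi_div_two, Real.sin_pi_div_two,
          one_mul, zero_mul, add_zero, zero_add]
        exact ⟨hj'.le, hi.le⟩)
      simp only at hθ
      set w' : ι → ι → ℝ := fun k => if k = i then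
        (fun a => Real.cos θ * w i a + Real.sin θ * w j a) else if k = j then
        (fun a => -Real.sin θ * w i a + Real.cos θ * w j a) else w k with hw'
      have hwi : w' i = (fun a => Real.cos θ * w i a + Real.sin θ * w j a) := by simp [hw']
      have hwj : w' j = (fun a => -Real.sin θ * w i a + Real.cos θ * w j a) := by
        simp [hw', hij.symm]
      have hwk : ∀ k, k ≠ i → k ≠ j → w' k = w k := by
        intro k h1 h2; simp [hw', h1, h2]
      refine ih w' ?_ ?_
      · intro a b
        rw [← hw a b]
        have hji : j ∈ Finset.univ.erase i := by simp [hij.symm]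
        rw [← Finset.add_sum_erase _ _ (Finset.mem_univ i), ← Finset.add_sum_erase _ _ hji,
          ← Finset.add_sum_erase _ (fun k => w k a * w k b) (Finset.mem_univ i),
          ← Finset.add_sum_erase _ (fun k => w k a * w k b) hji]
        have : ∑ x ∈ (Finset.univ.erase i).erase j, w' x a * w' x b =
            ∑ x ∈ (Finset.univ.erase i).erase j, w x a * w x b := by
          refine Finset.sum_congr rfl fun k hk => ?_
          simp only [Finset.mem_erase, Finset.mem_univ, and_true] at hk
          rw [hwk k hk.2 hk.1]
        rw [this, hwi, hwj]
        have := Real.sin_sq_add_cos_sq θ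
        linear_combination (w i a * w i b + w j a * w j b) * this
      · refine Nat.le_of_lt_succ (lt_of_lt_of_le (Finset.card_lt_card ?_) hc)
        refine Finset.ssubset_iff_of_subset ?_ |>.2 ⟨i, by simp [hi.ne'], by simp [hwi, hθ]⟩
        intro k hk
        simp only [Finset.mem_filter, Finset.mem_univ, true_and] at hk ⊢
        by_cases h1 : k = i
        · subst h1; exact hi.ne'
        by_cases h2 : k = j
        · subst h2; exact hj'.ne
        rwa [hwk k h1 h2] at hk
  refine main _ (fun k a => if k = a then 1 else 0) ?_ le_rfl
  intro a b
  simp [eq_comm]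

/-- The polarised spin-flip form. -/
def sS (x y : Fin 2 × Fin 2 → ℂ) : ℂ :=
  x (0, 0) * y (1, 1) + x (1, 1) * y (0, 0) - x (0, 1) * y (1, 0) - x (1, 0) * y (0, 1)

lemma sS_comm (x y) : sS x y = sS y x := by simp only [sS]; ring

lemma sS_smul_left (c : ℂ) (x y) : sS (c • x) y = c * sS x y := by
  simp only [sS, Pi.smul_apply, smul_eq_mul]; ring

lemma sS_smul_right (c : ℂ) (x y) : sS x (c • y) = c * sS x y := by
  simp only [sS, Pi.smul_apply, smul_eq_mul]; ring

lemma sS_add_left (x x' y) : sS (x + x') y = sS x y + sS x' y := by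
  simp only [sS, Pi.add_apply]; ring

lemma sS_add_right (x y y') : sS x (y + y') = sS x y + sS x y' := by
  simp only [sS, Pi.add_apply]; ring

/-- Bundled form. -/
def sB : (Fin 2 × Fin 2 → ℂ) →ₗ[ℂ] (Fin 2 × Fin 2 → ℂ) →ₗ[ℂ] ℂ :=
  LinearMap.mk₂ ℂ sS sS_add_left sS_smul_left sS_add_right sS_smul_right

lemma sB_apply (x y) : sB x y = sS x y := rfl

lemma sS_sum {ι : Type*} [Fintype ι] (a b : ι → ℂ) (v : ι → (Fin 2 × Fin 2 → ℂ)) :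
    sS (∑ i, a i • v i) (∑ i, b i • v i) = ∑ i, ∑ j, a i * b j * sS (v i) (v j) := by
  simp only [← sB_apply, map_sum, LinearMap.sum_apply, map_smul, LinearMap.smul_apply,
    smul_eq_mul, Finset.mul_sum]
  rw [Finset.sum_comm]
  refine Finset.sum_congr rfl fun i _ => Finset.sum_congr rfl fun j _ => by ring

lemma pureTangle_eq_s7 (ψ : Fin 2 × Fin 2 → ℂ) : pureTangle ψ = ‖sS ψ ψ‖ ^ 2 := by
  have : star ψ ⬝ᵥ (inverter (outer ψ) *ᵥ ψ) = sS ψ ψ * (starRingEnd ℂ) (sS ψ ψ) := by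
    simp [inverter, outer, ptraceA, ptraceB, dotProduct, mulVec, Fintype.sum_prod_type,
      Fin.sum_univ_two, Matrix.trace, vecMulVec_apply, Matrix.one_apply, sS,
      Matrix.conjTranspose_apply]
    ring
  rw [pureTangle, this, Complex.mul_conj, Complex.normSq_eq_norm_sq, Complex.ofReal_re]

lemma star_dot_self (w : Fin 2 × Fin 2 → ℂ) : star w ⬝ᵥ w = ((∑ a, ‖w a‖ ^ 2 : ℝ) : ℂ) := by
  simp only [dotProduct, Pi.star_apply]
  push_cast
  refine Finset.sum_congr rfl fun a _ => ?_
  rw [mul_comm]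
  simpa [Complex.normSq_eq_norm_sq] using Complex.mul_conj (w a)

lemma trace_outer (w : Fin 2 × Fin 2 → ℂ) : (outer w).trace = ((∑ a, ‖w a‖ ^ 2 : ℝ) : ℂ) := by
  rw [← star_dot_self, outer, Matrix.trace_vecMulVec, dotProduct_comm]

lemma outer_smul (c : ℂ) (w : Fin 2 × Fin 2 → ℂ) :
    outer (c • w) = (c * (starRingEnd ℂ) c) • outer w := by
  ext a b
  simp [outer, vecMulVec_apply]; ring

lemma outer_mix {ι κ : Type*} [Fintype ι] [Fintype κ] [DecidableEq ι] (O : κ → ι → ℂ)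
    (hO : ∀ a b, ∑ k, O k a * (starRingEnd ℂ) (O k b) = if a = b then 1 else 0)
    (v : ι → (Fin 2 × Fin 2 → ℂ)) :
    ∑ k, outer (∑ a, O k a • v a) = ∑ a, outer (v a) := by
  ext x y
  simp only [outer, Matrix.sum_apply, vecMulVec_apply, Pi.star_apply, Finset.sum_apply,
    Pi.smul_apply, smul_eq_mul, star_sum, star_mul', RCLike.star_def, Finset.sum_mul_sum]
  rw [Finset.sum_comm]
  calc _ = ∑ a, ∑ b, (∑ k, O k a * (starRingEnd ℂ) (O k b)) * (v a x * (starRingEnd ℂ) (v b y)) := by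
        refine Finset.sum_congr rfl fun a _ => ?_
        rw [Finset.sum_comm]
        refine Finset.sum_congr rfl fun b _ => ?_
        rw [Finset.sum_mul]
        refine Finset.sum_congr rfl fun k _ => by ring
    _ = _ := by simp [hO]

lemma outer_sum_dot {ι κ : Type*} [Fintype ι] [Fintype κ] (w : κ → (Fin 2 × Fin 2 → ℂ))
    (v : ι → (Fin 2 × Fin 2 → ℂ)) (h : ∑ i, outer (w i) = ∑ k, outer (v k))
    (f : (Fin 2 × Fin 2 → ℂ) →ₗ[ℂ] ℂ) :
    ∑ i, ‖f (w i)‖ ^ 2 = ∑ k, ‖f (v k)‖ ^ 2 := by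
  have key : ∀ x : Fin 2 × Fin 2 → ℂ, ((‖f x‖ ^ 2 : ℝ) : ℂ) =
      ∑ a, ∑ b, f (Pi.single a 1) * (starRingEnd ℂ) (f (Pi.single b 1)) * outer x a b := by
    intro x
    have hx : f x = ∑ a, x a * f (Pi.single a 1) := by
      conv_lhs => rw [pi_eq_sum_univ' x]
      simp
    have h1 : ((‖f x‖ ^ 2 : ℝ) : ℂ) = f x * (starRingEnd ℂ) (f x) := by
      rw [Complex.mul_conj, Complex.normSq_eq_norm_sq]
    rw [h1, hx, map_sum, Finset.sum_mul_sum]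
    refine Finset.sum_congr rfl fun a _ => Finset.sum_congr rfl fun b _ => ?_
    simp [outer, vecMulVec_apply]; ring
  have h2 : ∀ {μ : Type _} [Fintype μ] (w : μ → (Fin 2 × Fin 2 → ℂ)),
      ((∑ i, ‖f (w i)‖ ^ 2 : ℝ) : ℂ) =
      ∑ a, ∑ b, f (Pi.single a 1) * (starRingEnd ℂ) (f (Pi.single b 1)) *
        (∑ i, outer (w i)) a b := by
    intro μ _ w
    rw [Complex.ofReal_sum]
    simp only [key, Matrix.sum_apply, Finset.mul_sum]
    rw [Finset.sum_comm]
    refine Finset.sum_congr rfl fun a _ => ?_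
    rw [Finset.sum_comm]
  have h3 := h2 w
  have h4 : ((∑ i, ‖f (v i)‖ ^ 2 : ℝ) : ℂ) =
      ∑ a, ∑ b, f (Pi.single a 1) * (starRingEnd ℂ) (f (Pi.single b 1)) *
        (∑ i, outer (v i)) a b := by
    rw [Complex.ofReal_sum]
    simp only [key, Matrix.sum_apply, Finset.mul_sum]
    rw [Finset.sum_comm]
    refine Finset.sum_congr rfl fun a _ => ?_
    rw [Finset.sum_comm]
  rw [h, ← h4] at h3
  exact_mod_cast h3

lemma lower_bound {n : ℕ} (w : Fin n → (Fin 2 × Fin 2 → ℂ)) (v : Fin 4 → (Fin 2 × Fin 2 → ℂ))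
    (l : Fin 4 → ℂ) (h : ∑ i, outer (w i) = ∑ k, outer (v k))
    (hl : ∀ i j, sS (v i) (v j) = if i = j then l i else 0) (k0 : Fin 4) :
    2 * ‖l k0‖ - ∑ k, ‖l k‖ ≤ ∑ i, ‖sS (w i) (w i)‖ := by
  have hr : ∀ i, ∃ a : Fin 4 → ℂ, ∑ k, a k • v k = w i := by
    intro i
    rw [← Submodule.mem_span_range_iff_exists_fun]
    by_contra hw
    obtain ⟨f, hf, hfv⟩ := Submodule.exists_le_ker_of_notMem hw
    have hfv' : ∀ k, f (v k) = 0 := fun k => hfv (Submodule.subset_span ⟨k, rfl⟩)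
    have h1 := outer_sum_dot w v h f
    simp only [hfv', norm_zero, ne_eq, OfNat.ofNat_ne_zero, not_false_eq_true, zero_pow,
      Finset.sum_const_zero] at h1
    rw [Finset.sum_eq_zero_iff_of_nonneg (fun _ _ => by positivity)] at h1
    have := h1 i (Finset.mem_univ i)
    simp at this
    exact hf this
  choose a ha using hr
  have hq : ∀ i, sS (w i) (w i) = ∑ k, a i k ^ 2 * l k := by
    intro i
    rw [← ha i, sS_sum]
    refine Finset.sum_congr rfl fun k _ => ?_
    simp [hl, sq]
  have hs : ∀ k, ‖l k‖ * ∑ i, ‖a i k‖ ^ 2 = ‖l k‖ := by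
    intro k
    have h1 := outer_sum_dot w v h (sB (v k))
    have h2 : ∀ i, sB (v k) (w i) = l k * a i k := by
      intro i
      rw [← ha i]
      simp [sB_apply, hl]; ring
    simp only [h2] at h1
    simp only [sB_apply, hl, norm_mul, mul_pow, ← Finset.mul_sum, apply_ite norm, norm_zero, ite_pow, ne_eq,
      OfNat.ofNat_ne_zero, not_false_eq_true, zero_pow] at h1
    rw [Finset.sum_ite_eq, if_pos (Finset.mem_univ k)] at h1
    by_cases hlk : ‖l k‖ = 0
    · simp [hlk]
    · have : ∑ i, ‖a i k‖ ^ 2 = 1 :=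
        mul_left_cancel₀ (pow_ne_zero 2 hlk) (h1.trans (mul_one _).symm)
      rw [this, mul_one]
  have hb : ∀ i, 2 * (‖a i k0‖ ^ 2 * ‖l k0‖) - ∑ k, ‖a i k‖ ^ 2 * ‖l k‖ ≤ ‖sS (w i) (w i)‖ := by
    intro i
    rw [hq i]
    rw [← Finset.add_sum_erase _ _ (Finset.mem_univ k0),
      ← Finset.add_sum_erase _ (fun k => a i k ^ 2 * l k) (Finset.mem_univ k0)]
    have h1 : ‖∑ k ∈ Finset.univ.erase k0, a i k ^ 2 * l k‖ ≤
        ∑ k ∈ Finset.univ.erase k0, ‖a i k‖ ^ 2 * ‖l k‖ := by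
      refine (norm_sum_le _ _).trans (le_of_eq ?_)
      simp
    have h2 := norm_sub_le (a i k0 ^ 2 * l k0 + ∑ k ∈ Finset.univ.erase k0, a i k ^ 2 * l k)
      (∑ k ∈ Finset.univ.erase k0, a i k ^ 2 * l k)
    rw [add_sub_cancel_right, norm_mul, norm_pow] at h2
    linarith
  refine le_trans (le_of_eq ?_) (Finset.sum_le_sum fun i _ => hb i)
  rw [Finset.sum_sub_distrib, Finset.sum_comm, ← Finset.mul_sum, ← Finset.sum_mul]
  simp only [← Finset.sum_mul]
  rw [mul_comm (∑ i, ‖a i k0‖ ^ 2), hs]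
  congr 1
  refine Finset.sum_congr rfl fun k _ => ?_
  rw [mul_comm, hs]

lemma normalize_family {ρ : Matrix (Fin 2 × Fin 2) (Fin 2 × Fin 2) ℂ} (hρ : ρ.trace = 1)
    (w : Fin 4 → (Fin 2 × Fin 2 → ℂ)) (h : ρ = ∑ k, outer (w k)) :
    ∃ (n : ℕ) (p : Fin n → ℝ) (ψ : Fin n → (Fin 2 × Fin 2 → ℂ)),
    (∀ i, 0 < p i) ∧ (∑ i, p i = 1) ∧ (∀ i, star (ψ i) ⬝ᵥ ψ i = 1) ∧
    ρ = ∑ i, (p i : ℂ) • outer (ψ i) ∧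
    ∀ i, ∃ k, p i = ∑ a, ‖w k a‖ ^ 2 ∧ sS (w k) (w k) = p i * sS (ψ i) (ψ i) := by
  let N : Fin 4 → ℝ := fun k => ∑ a, ‖w k a‖ ^ 2
  have hN0 : ∀ k, 0 ≤ N k := fun k => Finset.sum_nonneg fun _ _ => by positivity
  have hNz : ∀ k, N k = 0 → w k = 0 := by
    intro k hk
    ext a
    have := (Finset.sum_eq_zero_iff_of_nonneg (fun _ _ => by positivity)).1 hk a (Finset.mem_univ a)
    simpa using this
  have hsum : ∑ k, N k = 1 := by
    have : (ρ.trace) = ((∑ k, N k : ℝ) : ℂ) := by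
      rw [h, Matrix.trace_sum, Complex.ofReal_sum]
      exact Finset.sum_congr rfl fun k _ => trace_outer _
    rw [hρ] at this
    exact_mod_cast this.symm
  have hsub : ∀ {M : Type} [AddCommMonoid M] (g : Fin 4 → M), (∀ k, N k = 0 → g k = 0) →
      ∑ k : {k : Fin 4 // N k ≠ 0}, g k = ∑ k, g k := by
    intro M _ g hg
    rw [← Finset.sum_subtype (Finset.univ.filter (fun k => N k ≠ 0)) (by simp) g]
    refine Finset.sum_filter_of_ne fun k _ hk hN => hk (hg k hN)
  let T := {k : Fin 4 // N k ≠ 0}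
  let e : Fin (Fintype.card T) ≃ T := (Fintype.equivFin T).symm
  have hpos : ∀ k : T, 0 < N k := fun k => lt_of_le_of_ne (hN0 k) (Ne.symm k.2)
  let φ : T → (Fin 2 × Fin 2 → ℂ) := fun k => (((Real.sqrt (N k))⁻¹ : ℝ) : ℂ) • w k
  have hinv : ∀ k : T, (((Real.sqrt (N k))⁻¹ : ℝ) : ℂ) * (((Real.sqrt (N k))⁻¹ : ℝ) : ℂ)
      = ((N k : ℝ) : ℂ)⁻¹ := by
    intro k
    rw [← Complex.ofReal_mul, ← mul_inv, Real.mul_self_sqrt (hN0 k), Complex.ofReal_inv]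
  have hNc : ∀ k : T, ((N k : ℝ) : ℂ) ≠ 0 := fun k => by exact_mod_cast k.2
  have hwo : ∀ k : T, ((N k : ℝ) : ℂ) • outer (φ k) = outer (w k) := by
    intro k
    simp only [φ]
    rw [outer_smul, Complex.conj_ofReal, hinv, smul_smul, mul_inv_cancel₀ (hNc k), one_smul]
  have hws : ∀ k : T, ((N k : ℝ) : ℂ) * sS (φ k) (φ k) = sS (w k) (w k) := by
    intro k
    simp only [φ]
    rw [sS_smul_left, sS_smul_right, ← mul_assoc _ _ (sS (w k) (w k)), hinv, ← mul_assoc,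
      mul_inv_cancel₀ (hNc k), one_mul]
  refine ⟨Fintype.card T, fun i => N (e i), fun i => φ (e i), fun i => hpos _, ?_, ?_, ?_, ?_⟩
  · rw [Equiv.sum_comp e (fun k : T => N k), ← hsum]
    exact hsub N (fun _ h => h)
  · intro i
    simp only [φ]
    rw [star_smul, smul_dotProduct, dotProduct_smul, smul_smul, star_dot_self]
    simp only [RCLike.star_def, Complex.conj_ofReal]
    rw [hinv]
    exact inv_mul_cancel₀ (hNc (e i))
  · rw [Equiv.sum_comp e (fun k : T => ((N k : ℝ) : ℂ) • outer (φ k)), h]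
    simp only [hwo]
    refine (hsub (fun k => outer (w k)) (fun k hk => ?_)).symm
    rw [hNz k hk]
    ext a b
    simp [outer, vecMulVec_apply]
  · intro i
    exact ⟨e i, rfl, (hws _).symm⟩

section
open scoped MatrixOrder

lemma exists_diag {ρ : Matrix (Fin 2 × Fin 2) (Fin 2 × Fin 2) ℂ} (hρ : ρ.PosSemidef) :
    ∃ (v : Fin 4 → (Fin 2 × Fin 2 → ℂ)) (l : Fin 4 → ℂ), ρ = ∑ k, outer (v k) ∧
      ∀ i j, sS (v i) (v j) = if i = j then l i else 0 := by
  obtain ⟨V, hV⟩ := CStarAlgebra.nonneg_iff_eq_mul_star_self.mp hρ.nonneg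
  let L : EuclideanSpace ℂ (Fin 2 × Fin 2) →ₗ[ℂ] (Fin 2 × Fin 2 → ℂ) :=
    V.mulVecLin ∘ₗ (WithLp.linearEquiv 2 ℂ (Fin 2 × Fin 2 → ℂ)).toLinearMap
  obtain ⟨u, hu, hB⟩ := aux_takagi 4 (EuclideanSpace ℂ (Fin 2 × Fin 2)) (by simp)
    (sB.compl₁₂ L L) (fun x y => sS_comm _ _)
  have hL : ∀ x, L x = ∑ a, x a • (fun b => V b a) := by
    intro x
    ext b
    simp [L, mulVec, dotProduct, mul_comm]
  let b : OrthonormalBasis (Fin 4) ℂ (EuclideanSpace ℂ (Fin 2 × Fin 2)) :=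
    (basisOfOrthonormalOfCardEqFinrank hu (by simp)).toOrthonormalBasis (by simpa using hu)
  have hb : ∀ k, b k = u k := by intro k; simp [b]
  refine ⟨fun k => L (u k), fun k => sS (L (u k)) (L (u k)), ?_, ?_⟩
  · simp only [hL]
    rw [outer_mix (fun k a => u k a)]
    · rw [hV]
      ext x y
      simp [outer, Matrix.sum_apply, vecMulVec_apply, Matrix.mul_apply]
    · intro x y
      have := b.sum_inner_mul_inner (EuclideanSpace.single x 1) (EuclideanSpace.single y 1)
      simpa [hb, EuclideanSpace.inner_single_left, EuclideanSpace.inner_single_right,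
        eq_comm (a := y) (b := x)] using this
  · intro i j
    split_ifs with h
    · subst h; rfl
    · exact hB i j h

end

lemma aux_sq_phase (l z : ℂ) (hz : ‖z‖ = 1) : ∃ u : ℂ, ‖u‖ = 1 ∧ u ^ 2 * l = z * ‖l‖ := by
  obtain ⟨e, he, hl⟩ := aux_phase l
  obtain ⟨u, hu⟩ := IsAlgClosed.exists_pow_nat_eq (z * (starRingEnd ℂ) e) (n := 2) (by norm_num)
  have hn : ‖u‖ ^ 2 = 1 := by rw [← norm_pow, hu]; simp [hz, he]
  refine ⟨u, by simpa [pow_eq_one_iff_of_nonneg] using hn, ?_⟩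
  calc u ^ 2 * l = z * (starRingEnd ℂ) e * (‖l‖ * e) := by rw [hu, ← hl]
    _ = z * ‖l‖ * (e * (starRingEnd ℂ) e) := by ring
    _ = _ := by rw [aux_unit_mul_conj he, mul_one]

lemma rephase (v : Fin 4 → (Fin 2 × Fin 2 → ℂ)) (l z : Fin 4 → ℂ)
    (hl : ∀ i j, sS (v i) (v j) = if i = j then l i else 0) (hz : ∀ i, ‖z i‖ = 1) :
    ∃ v' : Fin 4 → (Fin 2 × Fin 2 → ℂ), (∑ k, outer (v' k) = ∑ k, outer (v k)) ∧
      ∀ i j, sS (v' i) (v' j) = if i = j then z i * ‖l i‖ else 0 := by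
  choose u hu hul using fun i => aux_sq_phase (l i) (z i) (hz i)
  refine ⟨fun k => u k • v k, ?_, ?_⟩
  · refine Finset.sum_congr rfl fun k _ => ?_
    rw [outer_smul, aux_unit_mul_conj (hu k), one_smul]
  · intro i j
    rw [sS_smul_left, sS_smul_right, hl]
    split_ifs with h
    · subst h; rw [← hul]; ring
    · simp

lemma norm_sum_real (O : Fin 4 → ℝ) (v : Fin 4 → (Fin 2 × Fin 2 → ℂ)) :
    ∑ x, ‖(∑ a, (O a : ℂ) • v a) x‖ ^ 2 =
      ∑ a, ∑ b, O a * O b * (∑ x, (v a x * (starRingEnd ℂ) (v b x)).re) := by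
  have h : ∀ x, ‖(∑ a, (O a : ℂ) • v a) x‖ ^ 2 =
      ∑ a, ∑ b, O a * O b * (v a x * (starRingEnd ℂ) (v b x)).re := by
    intro x
    rw [← Complex.normSq_eq_norm_sq, ← Complex.ofReal_re (Complex.normSq _), ← Complex.mul_conj]
    simp only [Finset.sum_apply, Pi.smul_apply, smul_eq_mul, map_sum, Finset.sum_mul_sum,
      Complex.re_sum]
    refine Finset.sum_congr rfl fun a _ => Finset.sum_congr rfl fun b _ => ?_
    rw [map_mul, Complex.conj_ofReal]
    have : (O a : ℂ) * v a x * (O b * (starRingEnd ℂ) (v b x)) =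
      ((O a * O b : ℝ) : ℂ) * (v a x * (starRingEnd ℂ) (v b x)) := by push_cast; ring
    rw [this, Complex.re_ofReal_mul]
  simp only [h, Finset.mul_sum]
  rw [Finset.sum_comm]
  refine Finset.sum_congr rfl fun a _ => ?_
  rw [Finset.sum_comm]

lemma real_case {ρ : Matrix (Fin 2 × Fin 2) (Fin 2 × Fin 2) ℂ} (ht : ρ.trace = 1)
    (v : Fin 4 → (Fin 2 × Fin 2 → ℂ)) (r : Fin 4 → ℝ) (hv : ρ = ∑ k, outer (v k))
    (hr : ∀ i j, sS (v i) (v j) = if i = j then (r i : ℂ) else 0) :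
    ∃ w : Fin 4 → (Fin 2 × Fin 2 → ℂ), ρ = ∑ k, outer (w k) ∧
      ∀ k, sS (w k) (w k) = (((∑ i, r i) * ∑ a, ‖w k a‖ ^ 2 : ℝ) : ℂ) := by
  set c := ∑ i, r i with hc
  obtain ⟨O, hO, hOz⟩ := aux_zero_diag (fun a b => (if a = b then r a else 0) -
    c * ∑ x, (v a x * (starRingEnd ℂ) (v b x)).re) (by
      have h1 : ∑ a, ∑ x, (v a x * (starRingEnd ℂ) (v a x)).re = 1 := by
        have : ρ.trace = ((∑ a, ∑ x, ‖v a x‖ ^ 2 : ℝ) : ℂ) := by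
          rw [hv, Matrix.trace_sum, Complex.ofReal_sum]
          exact Finset.sum_congr rfl fun k _ => trace_outer _
        rw [ht] at this
        have h2 : (1 : ℝ) = ∑ a, ∑ x, ‖v a x‖ ^ 2 := by exact_mod_cast this
        rw [h2]
        refine Finset.sum_congr rfl fun a _ => Finset.sum_congr rfl fun x _ => ?_
        rw [Complex.mul_conj, Complex.normSq_eq_norm_sq, Complex.ofReal_re]
      simp only [if_true]
      rw [Finset.sum_sub_distrib, ← Finset.mul_sum, h1, ← hc]; ring)
  refine ⟨fun k => ∑ a, (O k a : ℂ) • v a, ?_, ?_⟩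
  · rw [outer_mix (fun k a => (O k a : ℂ)), hv]
    intro a b
    have := hO a b
    simp only [Complex.conj_ofReal]
    rw [← Complex.ofReal_one, ← Complex.ofReal_zero, ← apply_ite Complex.ofReal, ← this]
    push_cast; rfl
  · intro k
    have h1 := hOz k
    rw [norm_sum_real, sS_sum]
    simp only [mul_sub, Finset.sum_sub_distrib, sub_eq_zero] at h1
    have h2 : c * ∑ a, ∑ b, O k a * O k b * (∑ x, (v a x * (starRingEnd ℂ) (v b x)).re) =
        ∑ a, ∑ b, O k a * O k b * (c * (∑ x, (v a x * (starRingEnd ℂ) (v b x)).re)) := by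
      simp only [Finset.mul_sum]
      refine Finset.sum_congr rfl fun a _ => Finset.sum_congr rfl fun b _ =>
        Finset.sum_congr rfl fun x _ => by ring
    rw [h2, ← h1]
    push_cast
    refine Finset.sum_congr rfl fun a _ => Finset.sum_congr rfl fun b _ => ?_
    rw [hr]
    split_ifs <;> simp

lemma zero_case {ρ : Matrix (Fin 2 × Fin 2) (Fin 2 × Fin 2) ℂ}
    (v : Fin 4 → (Fin 2 × Fin 2 → ℂ)) (r : Fin 4 → ℂ) (hv : ρ = ∑ k, outer (v k))
    (hr : ∀ i j, sS (v i) (v j) = if i = j then r i else 0) (h0 : ∑ i, r i = 0) :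
    ∃ w : Fin 4 → (Fin 2 × Fin 2 → ℂ), ρ = ∑ k, outer (w k) ∧ ∀ k, sS (w k) (w k) = 0 := by
  have h2 : (starRingEnd ℂ) 2 = 2 := Complex.conj_ofNat 2
  let O : Fin 4 → Fin 4 → ℂ := ![![1/2, 1/2, 1/2, 1/2], ![1/2, -1/2, 1/2, -1/2],
    ![1/2, 1/2, -1/2, -1/2], ![1/2, -1/2, -1/2, 1/2]]
  refine ⟨fun k => ∑ a, O k a • v a, ?_, ?_⟩
  · rw [outer_mix O, hv]
    intro a b
    fin_cases a <;> fin_cases b <;>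
      simp [O, Fin.sum_univ_four, h2] <;> norm_num
  · intro k
    have hO : ∀ a, O k a * O k a = 1 / 4 := by
      intro a
      fin_cases k <;> fin_cases a <;> simp [O] <;> norm_num
    rw [sS_sum]
    simp [hr, hO, ← Finset.mul_sum, h0]

lemma exists_opt {ρ : Matrix (Fin 2 × Fin 2) (Fin 2 × Fin 2) ℂ} (hρ : IsDensityMatrix ρ) :
    ∃ (c : ℝ) (w : Fin 4 → (Fin 2 × Fin 2 → ℂ)), 0 ≤ c ∧ ρ = ∑ k, outer (w k) ∧
      (∀ k, ‖sS (w k) (w k)‖ = c * ∑ a, ‖w k a‖ ^ 2) ∧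
      ∀ (n : ℕ) (x : Fin n → (Fin 2 × Fin 2 → ℂ)), ρ = ∑ i, outer (x i) →
        c ≤ ∑ i, ‖sS (x i) (x i)‖ := by
  obtain ⟨v, l, hv, hl⟩ := exists_diag hρ.1
  by_cases hk : ∃ k0, ∑ k, ‖l k‖ - ‖l k0‖ ≤ ‖l k0‖
  · obtain ⟨k0, hk0⟩ := hk
    obtain ⟨v', hv', hl'⟩ := rephase v l (fun k => if k = k0 then 1 else -1) hl
      (fun i => by split_ifs <;> simp)
    obtain ⟨w, hw, hws⟩ := real_case hρ.2 v' (fun k => (if k = k0 then 1 else -1) * ‖l k‖)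
      (hv.trans hv'.symm) (by
        intro i j
        rw [hl']
        split_ifs <;> simp)
    have hc : ∑ i, (if i = k0 then (1 : ℝ) else -1) * ‖l i‖ = 2 * ‖l k0‖ - ∑ k, ‖l k‖ := by
      have : ∀ i, (if i = k0 then (1 : ℝ) else -1) * ‖l i‖ =
          (if i = k0 then 2 * ‖l i‖ else 0) - ‖l i‖ := by
        intro i; split_ifs <;> ring
      simp only [this, Finset.sum_sub_distrib]
      simp
    rw [hc] at hws
    have hc0 : 0 ≤ 2 * ‖l k0‖ - ∑ k, ‖l k‖ := by linarith
    refine ⟨2 * ‖l k0‖ - ∑ k, ‖l k‖, w, hc0, hw, ?_, ?_⟩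
    · intro k
      rw [hws, Complex.norm_real, Real.norm_of_nonneg]
      exact mul_nonneg hc0 (Finset.sum_nonneg fun _ _ => by positivity)
    · intro n x hx
      exact lower_bound x v l (hx.symm.trans hv) hl k0
  · push Not at hk
    obtain ⟨z, hz, hz0⟩ := aux_polygon (fun k => ‖l k‖) (fun _ => norm_nonneg _)
      (fun i => (hk i).le)
    obtain ⟨v', hv', hl'⟩ := rephase v l z hl hz
    obtain ⟨w, hw, hws⟩ := zero_case v' _ (hv.trans hv'.symm) hl' hz0
    exact ⟨0, w, le_rfl, hw, fun k => by simp [hws], fun n x _ =>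
      Finset.sum_nonneg fun _ _ => norm_nonneg _⟩

/-- For a pair of qubits, the I-tangle equals the square of the I-concurrence. -/
theorem itangle_eq_sq_concurrence_two_qubits
    (ρ : Matrix (Fin 2 × Fin 2) (Fin 2 × Fin 2) ℂ) (hρ : IsDensityMatrix ρ) :
    Itangle ρ = Iconcurrence ρ ^ 2 := by
  obtain ⟨c, w, hc, hw, hws, hlow⟩ := exists_opt hρ
  obtain ⟨n, p, ψ, hp, hp1, hψ, hdec, hval⟩ := normalize_family hρ.2 w hw
  have hψc : ∀ i, ‖sS (ψ i) (ψ i)‖ = c := by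
    intro i
    obtain ⟨k, hk1, hk2⟩ := hval i
    have h1 := hws k
    rw [hk2, ← hk1, norm_mul, Complex.norm_real, Real.norm_of_nonneg (hp i).le, mul_comm] at h1
    exact mul_right_cancel₀ (hp i).ne' h1
  have hT : Itangle ρ ≤ c ^ 2 := by
    refine csInf_le ⟨0, ?_⟩ ⟨n, p, ψ, hp, hp1, hψ, hdec, ?_⟩
    · rintro t ⟨n, p, ψ, hp, -, -, -, rfl⟩
      exact Finset.sum_nonneg fun i _ => mul_nonneg (hp i).le (by rw [pureTangle_eq_s7]; positivity)
    · simp only [pureTangle_eq_s7, hψc, ← Finset.sum_mul, hp1, one_mul]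
  have hC : c ≤ Iconcurrence ρ := by
    refine le_csInf ⟨_, n, p, ψ, hp, hp1, hψ, hdec, rfl⟩ ?_
    rintro t ⟨n, p, ψ, hp, -, -, hdec, rfl⟩
    have hsq : ∀ i, ((Real.sqrt (p i) : ℝ) : ℂ) * ((Real.sqrt (p i) : ℝ) : ℂ) = (p i : ℂ) := by
      intro i
      rw [← Complex.ofReal_mul, Real.mul_self_sqrt (hp i).le]
    refine (hlow n (fun i => ((Real.sqrt (p i) : ℝ) : ℂ) • ψ i) ?_).trans (le_of_eq ?_)
    · rw [hdec]
      refine Finset.sum_congr rfl fun i _ => ?_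
      rw [outer_smul, Complex.conj_ofReal, hsq]
    · refine Finset.sum_congr rfl fun i _ => ?_
      rw [sS_smul_left, sS_smul_right, ← mul_assoc, hsq, norm_mul, Complex.norm_real,
        Real.norm_of_nonneg (hp i).le, pureTangle_eq_s7, Real.sqrt_sq (norm_nonneg _)]
  refine le_antisymm (hT.trans (pow_le_pow_left₀ hc hC 2)) ?_
  refine le_csInf ⟨_, n, p, ψ, hp, hp1, hψ, hdec, rfl⟩ ?_
  rintro t ⟨n, p, ψ, hp, hp1, hψ, hdec, rfl⟩
  have h1 : Iconcurrence ρ ≤ ∑ i, p i * Real.sqrt (pureTangle (ψ i)) := by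
    refine csInf_le ⟨0, ?_⟩ ⟨n, p, ψ, hp, hp1, hψ, hdec, rfl⟩
    rintro t ⟨n, p, ψ, hp, -, -, -, rfl⟩
    exact Finset.sum_nonneg fun i _ => mul_nonneg (hp i).le (Real.sqrt_nonneg _)
  refine (pow_le_pow_left₀ (hc.trans hC) h1 2).trans ?_
  have h3 := Real.pow_arith_mean_le_arith_mean_pow Finset.univ p
    (fun i => Real.sqrt (pureTangle (ψ i))) (fun i _ => (hp i).le) hp1
    (fun i _ => Real.sqrt_nonneg _) 2
  refine h3.trans (le_of_eq ?_)
  refine Finset.sum_congr rfl fun i _ => ?_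
  rw [Real.sq_sqrt (by rw [pureTangle_eq_s7]; positivity)]
end
end

section
/- Let ρ be a density matrix on ℂ^{dA} ⊗ ℂ^{dB} of rank at most 2. Then the infimum defining the I-tangle is attained by a decomposition into at most two pure states: there exist q ∈ [0,1] and unit vectors φ1, φ2 with ρ = q|φ1⟩⟨φ1| + (1−q)|φ2⟩⟨φ2| and τ(ρ) = q ⟨φ1| ρ̃_1 |φ1⟩ + (1−q) ⟨φ2| ρ̃_2 |φ2⟩, where ρ_k = |φ_k⟩⟨φ_k|. -/
open Matrix Kronecker
open scoped ComplexOrder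

noncomputable section

open Finset in
lemma core {E : Type*} [NormedAddCommGroup E] [InnerProductSpace ℝ E] [FiniteDimensional ℝ E] [Nontrivial E]
   (c : ℝ) (l : E →ₗ[ℝ] ℝ) (b : E →ₗ[ℝ] E →ₗ[ℝ] ℝ) (R : ℝ) (r : E) (hR : 0 ≤ R) (hr : ‖r‖ ≤ R) :
   ∃ (θ : ℝ) (u v : E), 0 ≤ θ ∧ θ ≤ 1 ∧ ‖u‖ = R ∧ ‖v‖ = R ∧ r = θ • u + (1-θ) • v ∧
    ∀ (n : ℕ) (p : Fin n → ℝ) (w : Fin n → E), (∀ i, 0 < p i) → ∑ i, p i = 1 → (∀ i, ‖w i‖ = R) →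
      ∑ i, p i • w i = r →
      θ * (c + l u + b u u) + (1-θ) * (c + l v + b v v) ≤ ∑ i, p i * (c + l (w i) + b (w i) (w i)) := by
  classical
  have hcont : Continuous fun x : E => b x x := by
    let b' := LinearMap.toContinuousBilinearMap b
    have : (fun x : E => b x x) = fun x => b' x x := by ext x; rfl
    rw [this]; fun_prop
  obtain ⟨N, hN, hmin⟩ := (isCompact_sphere (0:E) 1).exists_isMinOn
    (NormedSpace.sphere_nonempty.2 zero_le_one) hcont.continuousOn
  have hN1 : ‖N‖ = 1 := by simpa using hN
  set lam := b N N with hlam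
  have hq : ∀ d : E, lam * ‖d‖^2 ≤ b d d := by
    intro d
    by_cases hd : d = 0
    · simp [hd]
    have h0 : ‖d‖ ≠ 0 := by simpa using hd
    have hm : ‖d‖⁻¹ • d ∈ Metric.sphere (0:E) 1 := by simp [norm_smul, h0]
    have h1 := hmin hm
    simp only [Set.mem_ofPred_eq, map_smul, LinearMap.smul_apply, smul_eq_mul] at h1
    rw [← hlam] at h1
    have h2 : 0 < ‖d‖^2 := by positivity
    calc lam * ‖d‖^2 ≤ (‖d‖⁻¹ * (‖d‖⁻¹ * b d d)) * ‖d‖^2 := by gcongr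
      _ = b d d := by field_simp
  set s := inner ℝ r N with hs
  set D := Real.sqrt (s^2 + R^2 - ‖r‖^2) with hD
  have hD2 : D^2 = s^2 + R^2 - ‖r‖^2 := Real.sq_sqrt (by nlinarith [sq_nonneg s, norm_nonneg r])
  have hD0 : 0 ≤ D := Real.sqrt_nonneg _
  have hsD : |s| ≤ D := by
    apply Real.abs_le_sqrt; nlinarith [norm_nonneg r]
  have hnorm : ∀ t : ℝ, ‖r + t • N‖^2 = ‖r‖^2 + 2 * t * s + t^2 := by
    intro t
    rw [norm_add_sq_real, inner_smul_right, norm_smul, hN1, ← hs]; simp; ring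
  have hon : ∀ t : ℝ, (t + s)^2 = D^2 → ‖r + t • N‖ = R := by
    intro t ht
    rw [← sq_eq_sq₀ (norm_nonneg _) hR, hnorm]; nlinarith
  -- lower bound
  have key : ∀ (n : ℕ) (p : Fin n → ℝ) (w : Fin n → E), (∀ i, 0 < p i) → ∑ i, p i = 1 → (∀ i, ‖w i‖ = R) →
      ∑ i, p i • w i = r → c + l r + b r r + lam * (R^2 - ‖r‖^2) ≤ ∑ i, p i * (c + l (w i) + b (w i) (w i)) := by
    intro n p w hp hp1 hw hsum
    have h1 : ∀ i, p i * (c + l (w i) + b r (w i) + b (w i) r - b r r + lam * (R^2 - 2 * inner ℝ (w i) r + ‖r‖^2)) ≤ p i * (c + l (w i) + b (w i) (w i)) := by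
      intro i
      apply mul_le_mul_of_nonneg_left _ (hp i).le
      have := hq (w i - r)
      rw [norm_sub_sq_real, hw] at this
      simp only [map_sub, LinearMap.sub_apply] at this
      linarith
    refine le_trans (le_of_eq ?_) (Finset.sum_le_sum fun i _ => h1 i)
    have e1 : ∑ i, p i * l (w i) = l r := by rw [← hsum]; simp
    have e2 : ∑ i, p i * b r (w i) = b r r := by
      have : b r r = b r (∑ i, p i • w i) := by rw [hsum]
      rw [this]; simp
    have e3 : ∑ i, p i * b (w i) r = b r r := by
      have : b r r = b (∑ i, p i • w i) r := by rw [hsum]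
      rw [this]; simp
    have e4 : ∑ i, p i * inner ℝ (w i) r = ‖r‖^2 := by
      have : ‖r‖^2 = inner ℝ (∑ i, p i • w i) r := by rw [hsum, real_inner_self_eq_norm_sq]
      rw [this, sum_inner]; simp [inner_smul_left]
    have : ∀ i, p i * (c + l (w i) + b r (w i) + b (w i) r - b r r + lam * (R^2 - 2 * inner ℝ (w i) r + ‖r‖^2))
      = p i * (c - b r r + lam * (R^2 + ‖r‖^2)) + p i * l (w i) + p i * b r (w i) + p i * b (w i) r - 2 * lam * (p i * inner ℝ (w i) r) := by
      intro i; ring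
    simp only [this, sum_sub_distrib, sum_add_distrib, ← Finset.mul_sum, ← Finset.sum_mul, e1, e2, e3, e4, hp1]
    ring
  have hval : ∀ t : ℝ, c + l (r + t • N) + b (r + t • N) (r + t • N) =
      c + l r + b r r + t * (l N + b r N + b N r) + t^2 * lam := by
    intro t; simp; ring
  obtain ⟨hs1, hs2⟩ := abs_le.1 hsD
  obtain ⟨θ, h0, h1, hθ⟩ : ∃ θ : ℝ, 0 ≤ θ ∧ θ ≤ 1 ∧ θ * (D - s) + (1-θ) * (-D - s) = 0 := by
    by_cases hz : D = 0
    · exact ⟨0, le_rfl, zero_le_one, by linarith⟩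
    · have : 0 < D := lt_of_le_of_ne hD0 (Ne.symm hz)
      refine ⟨(D+s)/(2*D), by apply div_nonneg <;> linarith, by rw [div_le_one] <;> linarith, ?_⟩
      field_simp; ring
  refine ⟨θ, r + (D - s) • N, r + (-D-s) • N, h0, h1, hon _ (by ring), hon _ (by ring), ?_, ?_⟩
  · have : θ • (r + (D - s) • N) + (1-θ) • (r + (-D-s) • N) = r + (θ * (D - s) + (1-θ) * (-D - s)) • N := by module
    rw [this, hθ]; simp
  · intro n p w hp hp1 hw hsum
    refine le_trans (le_of_eq ?_) (key n p w hp hp1 hw hsum)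
    rw [hval, hval]
    have : R^2 - ‖r‖^2 = D^2 - s^2 := by linarith
    rw [this]
    linear_combination (l N + b r N + b N r - 2 * s * lam) * hθ

lemma outer_sandwich {dA dB : ℕ} (ψ x y : Fin dA × Fin dB → ℂ) :
    star x ⬝ᵥ (outer ψ *ᵥ y) = (star x ⬝ᵥ ψ) * (star ψ ⬝ᵥ y) := by
  unfold outer
  rw [Matrix.vecMulVec_mulVec]
  simp [dotProduct_smul, mul_comm]

lemma star_dot_comm {ι : Type*} [Fintype ι] (x y : ι → ℂ) :
    star x ⬝ᵥ y = star (star y ⬝ᵥ x) := by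
  rw [Matrix.star_dotProduct]

/-- linear version of the inverter -/
def invLin (dA dB : ℕ) : Matrix (Fin dA × Fin dB) (Fin dA × Fin dB) ℂ →ₗ[ℝ]
    Matrix (Fin dA × Fin dB) (Fin dA × Fin dB) ℂ where
  toFun := inverter
  map_add' X Y := by
    ext ⟨i, j⟩ ⟨k, l⟩
    simp [inverter, ptraceA, ptraceB, Matrix.one_apply, Finset.sum_add_distrib]
    split_ifs <;> ring
  map_smul' r X := by
    ext ⟨i, j⟩ ⟨k, l⟩
    simp [inverter, ptraceA, ptraceB, Matrix.one_apply, ← Finset.mul_sum, Matrix.trace]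
    split_ifs <;> ring

def BB (dA dB : ℕ) : Matrix (Fin dA × Fin dB) (Fin dA × Fin dB) ℂ →ₗ[ℝ]
    Matrix (Fin dA × Fin dB) (Fin dA × Fin dB) ℂ →ₗ[ℝ] ℝ :=
  LinearMap.mk₂ ℝ (fun X Y => (Matrix.trace (X * invLin dA dB Y)).re)
    (by intros; simp [add_mul]) (by intros; simp)
    (by intros; simp [mul_add]) (by intros; simp)

lemma pureTangle_eq_s12 {dA dB : ℕ} (ψ : Fin dA × Fin dB → ℂ) :
    pureTangle ψ = BB dA dB (outer ψ) (outer ψ) := by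
  simp only [pureTangle, BB, LinearMap.mk₂_apply]
  change _ = (Matrix.trace (outer ψ * inverter (outer ψ))).re
  generalize inverter (outer ψ) = M
  rw [outer, Matrix.vecMulVec_mul, Matrix.trace_vecMulVec, Matrix.dotProduct_mulVec,
    dotProduct_comm]

lemma finish {dA dB : ℕ} (ρ : Matrix (Fin dA × Fin dB) (Fin dA × Fin dB) ℂ)
    (q : ℝ) (φ₁ φ₂ : Fin dA × Fin dB → ℂ) (h0 : 0 ≤ q) (h1 : q ≤ 1)
    (hu1 : star φ₁ ⬝ᵥ φ₁ = 1) (hu2 : star φ₂ ⬝ᵥ φ₂ = 1)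
    (hdec : ρ = (q : ℂ) • outer φ₁ + ((1 - q : ℝ) : ℂ) • outer φ₂)
    (hlow : ∀ (n : ℕ) (p : Fin n → ℝ) (ψ : Fin n → (Fin dA × Fin dB → ℂ)),
    (∀ i, 0 < p i) → (∑ i, p i = 1) → (∀ i, star (ψ i) ⬝ᵥ ψ i = 1) →
    ρ = ∑ i, (p i : ℂ) • outer (ψ i) →
      q * pureTangle φ₁ + (1 - q) * pureTangle φ₂ ≤ ∑ i, p i * pureTangle (ψ i)) :
    Itangle ρ = q * pureTangle φ₁ + (1 - q) * pureTangle φ₂ := by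
  apply IsLeast.csInf_eq
  constructor
  · rcases h0.eq_or_lt with h | h
    · subst h
      exact ⟨1, fun _ => 1, fun _ => φ₂, by simp, by simp, by simpa using hu2,
        by simpa using hdec, by simp⟩
    rcases h1.eq_or_lt with h' | h'
    · subst h'
      exact ⟨1, fun _ => 1, fun _ => φ₁, by simp, by simp, by simpa using hu1,
        by simpa using hdec, by simp⟩
    · refine ⟨2, ![q, 1 - q], ![φ₁, φ₂], ?_, by simp, ?_, ?_, by simp⟩
      · intro i; fin_cases i <;> simp [h, h']
      · intro i; fin_cases i <;> simp [hu1, hu2]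
      · rw [Fin.sum_univ_two]; exact hdec
  · rintro t ⟨n, p, ψ, hp, hp1, hψ, hd, rfl⟩
    exact hlow n p ψ hp hp1 hψ hd

lemma supp {dA dB : ℕ} (e₁ e₂ : Fin dA × Fin dB → ℂ)
    (h11 : star e₁ ⬝ᵥ e₁ = 1) (h22 : star e₂ ⬝ᵥ e₂ = 1) (h12 : star e₁ ⬝ᵥ e₂ = 0)
    (a b : ℂ) (n : ℕ) (p : Fin n → ℝ) (ψ : Fin n → (Fin dA × Fin dB → ℂ))
    (hp : ∀ i, 0 < p i)
    (hd : a • outer e₁ + b • outer e₂ = ∑ i, (p i : ℂ) • outer (ψ i)) (i : Fin n) :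
    ψ i = (star e₁ ⬝ᵥ ψ i) • e₁ + (star e₂ ⬝ᵥ ψ i) • e₂ := by
  have h21 : star e₂ ⬝ᵥ e₁ = 0 := by rw [star_dot_comm, h12, star_zero]
  set x := ψ i - ((star e₁ ⬝ᵥ ψ i) • e₁ + (star e₂ ⬝ᵥ ψ i) • e₂) with hx
  have hx1 : star e₁ ⬝ᵥ x = 0 := by
    simp [hx, dotProduct_sub, dotProduct_add, dotProduct_smul, h11, h12]
  have hx2 : star e₂ ⬝ᵥ x = 0 := by
    simp [hx, dotProduct_sub, dotProduct_add, dotProduct_smul, h22, h21]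
  have h := congrArg (fun M => star x ⬝ᵥ (M *ᵥ x)) hd
  simp only [Matrix.add_mulVec, Matrix.smul_mulVec, dotProduct_add, dotProduct_smul,
    outer_sandwich, hx1, hx2, Matrix.sum_mulVec, dotProduct_sum] at h
  have h' : ∑ k, p k * Complex.normSq (star x ⬝ᵥ ψ k) = 0 := by
    have h2 := congrArg Complex.re h.symm
    simp only [smul_eq_mul, mul_zero, add_zero, Complex.zero_re, Complex.re_sum] at h2
    rw [← h2]
    refine Finset.sum_congr rfl fun k _ => ?_
    rw [star_dot_comm (ψ k) x, Complex.star_def, Complex.mul_conj, ← Complex.ofReal_mul,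
      Complex.ofReal_re]
  rw [Finset.sum_eq_zero_iff_of_nonneg
    (fun k _ => mul_nonneg (hp k).le (Complex.normSq_nonneg _))] at h'
  have h3 := h' i (Finset.mem_univ _)
  have h4 : star x ⬝ᵥ ψ i = 0 := by
    rcases mul_eq_zero.1 h3 with h | h
    · exact absurd h (hp i).ne'
    · exact Complex.normSq_eq_zero.1 h
  have h5 : star x ⬝ᵥ x = 0 := by
    conv_lhs => rw [hx]
    rw [← hx, dotProduct_sub, dotProduct_add, dotProduct_smul, dotProduct_smul, h4,
      star_dot_comm x e₁, star_dot_comm x e₂, hx1, hx2]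
    simp
  have h6 : x = 0 := dotProduct_star_self_eq_zero.1 h5
  exact sub_eq_zero.1 h6

/-- Off-center part in Bloch coordinates. -/
def AA {dA dB : ℕ} (e₁ e₂ : Fin dA × Fin dB → ℂ) : EuclideanSpace ℝ (Fin 3) →ₗ[ℝ]
    Matrix (Fin dA × Fin dB) (Fin dA × Fin dB) ℂ where
  toFun r := (r 0 : ℂ) • (outer e₁ - outer e₂)
    + ((r 1 : ℂ) + (r 2 : ℂ) * Complex.I) • Matrix.vecMulVec e₁ (star e₂)
    + ((r 1 : ℂ) - (r 2 : ℂ) * Complex.I) • Matrix.vecMulVec e₂ (star e₁)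
  map_add' r s := by
    simp only [PiLp.add_apply, Complex.ofReal_add]; module
  map_smul' t r := by
    ext i j
    simp; ring

lemma outer_comb_s12 {dA dB : ℕ} (e₁ e₂ : Fin dA × Fin dB → ℂ) (α β : ℂ)
    (h : Complex.normSq α + Complex.normSq β = 1) (r : EuclideanSpace ℝ (Fin 3))
    (h0 : r 0 = Complex.normSq α - 1/2) (h1 : r 1 = (α * star β).re)
    (h2 : r 2 = (α * star β).im) :
    outer (α • e₁ + β • e₂) = (1/2 : ℝ) • (outer e₁ + outer e₂) + AA e₁ e₂ r := by
  have e1 : (r 1 : ℂ) + (r 2 : ℂ) * Complex.I = α * star β := by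
    rw [h1, h2]; exact Complex.re_add_im _
  have e2 : (r 1 : ℂ) - (r 2 : ℂ) * Complex.I = star α * β := by
    have := congrArg star e1
    simpa [sub_eq_add_neg, mul_comm] using this
  have e3 : α * star α = 1/2 + r 0 := by
    rw [Complex.star_def, Complex.mul_conj, h0]; push_cast; ring
  have e4 : β * star β = 1/2 - r 0 := by
    rw [Complex.star_def, Complex.mul_conj, h0]; push_cast
    have : (1:ℂ) = Complex.normSq α + Complex.normSq β := by rw [← Complex.ofReal_add, h]; simp
    linear_combination - this
  ext i j
  simp only [AA, LinearMap.coe_mk, AddHom.coe_mk, e1, e2]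
  simp only [outer, Matrix.vecMulVec_apply, Matrix.add_apply, Matrix.smul_apply, Matrix.sub_apply,
    Pi.add_apply, Pi.smul_apply, Pi.star_apply, smul_eq_mul, star_add, star_mul',
    Complex.real_smul]
  push_cast
  linear_combination (e₁ i * star (e₁ j)) * e3 + (e₂ i * star (e₂ j)) * e4

lemma norm_r (r : EuclideanSpace ℝ (Fin 3)) : ‖r‖^2 = r 0 ^2 + r 1 ^2 + r 2 ^ 2 := by
  rw [EuclideanSpace.norm_sq_eq]; simp [Fin.sum_univ_three]

lemma norm_of_ab (α β : ℂ)
    (h : Complex.normSq α + Complex.normSq β = 1) (r : EuclideanSpace ℝ (Fin 3))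
    (h0 : r 0 = Complex.normSq α - 1/2) (h1 : r 1 = (α * star β).re)
    (h2 : r 2 = (α * star β).im) : ‖r‖ = 1/2 := by
  rw [← sq_eq_sq₀ (norm_nonneg _) (by norm_num), norm_r, h0, h1, h2]
  have := Complex.normSq_apply (α * star β)
  rw [Complex.normSq_mul, Complex.star_def, Complex.normSq_conj] at this
  rw [Complex.star_def]
  have hb : Complex.normSq β = 1 - Complex.normSq α := by linarith
  rw [hb] at this
  nlinarith

lemma exists_ab (r : EuclideanSpace ℝ (Fin 3)) (hr : ‖r‖ = 1/2) :
    ∃ α β : ℂ, Complex.normSq α + Complex.normSq β = 1 ∧ r 0 = Complex.normSq α - 1/2 ∧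
      r 1 = (α * star β).re ∧ r 2 = (α * star β).im := by
  have h := norm_r r
  rw [hr] at h
  have hge : 0 ≤ r 0 + 1/2 := by nlinarith [sq_nonneg (r 1), sq_nonneg (r 2)]
  rcases hge.eq_or_lt with h' | h'
  · have h0 : r 0 = -1/2 := by linarith
    rw [h0] at h
    have h1 : r 1 = 0 := by nlinarith [sq_nonneg (r 1), sq_nonneg (r 2)]
    have h2 : r 2 = 0 := by nlinarith [sq_nonneg (r 1), sq_nonneg (r 2)]
    refine ⟨0, 1, by simp, by rw [h0]; norm_num, by simp [h1], by simp [h2]⟩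
  · set s := Real.sqrt (r 0 + 1/2) with hs
    have hs2 : s^2 = r 0 + 1/2 := Real.sq_sqrt hge
    have hs0 : 0 < s := Real.sqrt_pos.2 h'
    refine ⟨s, ⟨r 1 / s, - (r 2 / s)⟩, ?_, ?_, ?_, ?_⟩
    · simp [Complex.normSq_mk]
      field_simp
      nlinarith
    · simp; nlinarith
    · simp; field_simp
    · simp; field_simp

lemma unit_comb {ι : Type*} [Fintype ι] (e₁ e₂ : ι → ℂ)
    (h11 : star e₁ ⬝ᵥ e₁ = 1) (h22 : star e₂ ⬝ᵥ e₂ = 1) (h12 : star e₁ ⬝ᵥ e₂ = 0) (α β : ℂ) :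
    star (α • e₁ + β • e₂) ⬝ᵥ (α • e₁ + β • e₂) = 
      ((Complex.normSq α + Complex.normSq β : ℝ) : ℂ) := by
  have h21 : star e₂ ⬝ᵥ e₁ = 0 := by rw [star_dot_comm, h12, star_zero]
  simp only [star_add, star_smul, add_dotProduct, dotProduct_add, smul_dotProduct,
    dotProduct_smul, h11, h22, h12, h21, smul_eq_mul]
  push_cast
  rw [← Complex.mul_conj, ← Complex.mul_conj, Complex.star_def]
  ring

lemma two_dim {dA dB : ℕ} (e₁ e₂ : Fin dA × Fin dB → ℂ)
    (h11 : star e₁ ⬝ᵥ e₁ = 1) (h22 : star e₂ ⬝ᵥ e₂ = 1) (h12 : star e₁ ⬝ᵥ e₂ = 0)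
    (a b : ℝ) (ha : 0 ≤ a) (hb : 0 ≤ b) (hab : a + b = 1)
    (ρ : Matrix (Fin dA × Fin dB) (Fin dA × Fin dB) ℂ)
    (hρ : ρ = (a : ℂ) • outer e₁ + (b : ℂ) • outer e₂) :
    ∃ (q : ℝ) (φ₁ φ₂ : Fin dA × Fin dB → ℂ),
      0 ≤ q ∧ q ≤ 1 ∧
      star φ₁ ⬝ᵥ φ₁ = 1 ∧ star φ₂ ⬝ᵥ φ₂ = 1 ∧
      ρ = (q : ℂ) • outer φ₁ + ((1 - q : ℝ) : ℂ) • outer φ₂ ∧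
      Itangle ρ = q * pureTangle φ₁ + (1 - q) * pureTangle φ₂ := by
  have h21 : star e₂ ⬝ᵥ e₁ = 0 := by rw [star_dot_comm, h12, star_zero]
  set X0 : Matrix (Fin dA × Fin dB) (Fin dA × Fin dB) ℂ := (1/2 : ℝ) • (outer e₁ + outer e₂) with hX0
  set A := AA e₁ e₂ with hA
  set r : EuclideanSpace ℝ (Fin 3) := !₂[a - 1/2, 0, 0] with hr
  have hrn : ‖r‖ ≤ 1/2 := by
    rw [← sq_le_sq₀ (norm_nonneg _) (by norm_num), norm_r]
    simp [hr]; nlinarith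
  have hρr : ρ = X0 + A r := by
    rw [hρ, hX0, hA]
    ext i j
    have : (b : ℂ) = 1 - a := by rw [eq_sub_iff_add_eq', ← Complex.ofReal_add, hab, Complex.ofReal_one]
    simp [AA, hr, this]
    ring
  have hF : ∀ u, BB dA dB (X0 + A u) (X0 + A u) = BB dA dB X0 X0 +
      ((BB dA dB X0).comp A + ((BB dA dB).flip X0).comp A) u + ((BB dA dB).compl₁₂ A A) u u := by
    intro u
    simp; ring
  obtain ⟨θ, u, v, h0, h1, hu, hv, hruv, hlow⟩ := core (BB dA dB X0 X0)
    ((BB dA dB X0).comp A + ((BB dA dB).flip X0).comp A) ((BB dA dB).compl₁₂ A A) (1/2) r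
    (by norm_num) hrn
  obtain ⟨α, β, k, k0, k1, k2⟩ := exists_ab u hu
  obtain ⟨α', β', k', k0', k1', k2'⟩ := exists_ab v hv
  have o1 := outer_comb_s12 e₁ e₂ α β k u k0 k1 k2
  have o2 := outer_comb_s12 e₁ e₂ α' β' k' v k0' k1' k2'
  rw [← hX0, ← hA] at o1 o2
  have n1 := unit_comb e₁ e₂ h11 h22 h12 α β
  have n2 := unit_comb e₁ e₂ h11 h22 h12 α' β'
  rw [k, Complex.ofReal_one] at n1
  rw [k', Complex.ofReal_one] at n2
  have hd : ρ = (θ : ℂ) • outer (α • e₁ + β • e₂) + ((1 - θ : ℝ) : ℂ) • outer (α' • e₁ + β' • e₂) := by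
    rw [o1, o2, hρr, hruv]
    simp only [Complex.coe_smul, map_add, map_smul]
    module
  refine ⟨θ, α • e₁ + β • e₂, α' • e₁ + β' • e₂, h0, h1, n1, n2, hd, ?_⟩
  apply finish ρ θ _ _ h0 h1 n1 n2 hd
  intro n p ψ hp hp1 hψ hdec
  have hs := supp e₁ e₂ h11 h22 h12 a b n p ψ hp (hρ ▸ hdec)
  set f : Fin n → ℂ := fun i => star e₁ ⬝ᵥ ψ i with hf
  set g : Fin n → ℂ := fun i => star e₂ ⬝ᵥ ψ i with hg
  have hs' : ∀ i, ψ i = f i • e₁ + g i • e₂ := hs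
  have hfg : ∀ i, Complex.normSq (f i) + Complex.normSq (g i) = 1 := by
    intro i
    have h := unit_comb e₁ e₂ h11 h22 h12 (f i) (g i)
    rw [← hs' i, hψ] at h
    exact_mod_cast h.symm
  set w : Fin n → EuclideanSpace ℝ (Fin 3) := fun i =>
    !₂[Complex.normSq (f i) - 1/2, (f i * star (g i)).re, (f i * star (g i)).im] with hw
  have hwn : ∀ i, ‖w i‖ = 1/2 := fun i => norm_of_ab (f i) (g i) (hfg i) (w i) rfl rfl rfl
  have how : ∀ i, outer (ψ i) = X0 + A (w i) := by
    intro i; rw [hs' i]; exact outer_comb_s12 e₁ e₂ (f i) (g i) (hfg i) (w i) rfl rfl rfl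
  have hdec' := hρ.symm.trans hdec
  have c1 := congrArg (fun M => star e₁ ⬝ᵥ (M *ᵥ e₁)) hdec'
  have c2 := congrArg (fun M => star e₁ ⬝ᵥ (M *ᵥ e₂)) hdec'
  simp only [Matrix.add_mulVec, Matrix.smul_mulVec, dotProduct_add, dotProduct_smul,
    outer_sandwich, h11, h12, h21, h22, Matrix.sum_mulVec, dotProduct_sum] at c1 c2
  have d1 : ∑ i, p i * Complex.normSq (f i) = a := by
    have : ((∑ i, p i * Complex.normSq (f i) : ℝ) : ℂ) = a := by
      push_cast
      simp only [smul_eq_mul, mul_one, mul_zero, add_zero] at c1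
      rw [c1]
      refine Finset.sum_congr rfl fun i _ => ?_
      rw [star_dot_comm (ψ i) e₁, Complex.star_def, Complex.mul_conj]
    exact_mod_cast this
  have d2 : ∑ i, (p i : ℂ) * (f i * star (g i)) = 0 := by
    simp only [smul_eq_mul, mul_one, mul_zero, add_zero] at c2
    rw [c2]
    refine Finset.sum_congr rfl fun i _ => ?_
    rw [star_dot_comm (ψ i) e₂]
  have d3 := congrArg Complex.re d2
  have d4 := congrArg Complex.im d2
  simp only [Complex.re_sum, Complex.im_sum, Complex.re_ofReal_mul, Complex.im_ofReal_mul,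
    Complex.zero_re, Complex.zero_im] at d3 d4
  have hsum : ∑ i, p i • w i = r := by
    ext k
    fin_cases k
    · simp [hw, hr, mul_sub, Finset.sum_sub_distrib, d1, ← Finset.sum_mul, hp1]
    · simpa [hw, hr] using d3
    · simpa [hw, hr] using d4
  have := hlow n p w hp hp1 hwn hsum
  simp only [← hF] at this
  simpa only [pureTangle_eq_s12, o1, o2, how] using this

theorem itangle_attained_rank_two {dA dB : ℕ}
    (ρ : Matrix (Fin dA × Fin dB) (Fin dA × Fin dB) ℂ)
    (hρ : IsDensityMatrix ρ) (hrank : ρ.rank ≤ 2) :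
    ∃ (q : ℝ) (φ₁ φ₂ : Fin dA × Fin dB → ℂ),
      0 ≤ q ∧ q ≤ 1 ∧
      star φ₁ ⬝ᵥ φ₁ = 1 ∧ star φ₂ ⬝ᵥ φ₂ = 1 ∧
      ρ = (q : ℂ) • outer φ₁ + ((1 - q : ℝ) : ℂ) • outer φ₂ ∧
      Itangle ρ = q * pureTangle φ₁ + (1 - q) * pureTangle φ₂ := by
  classical
  obtain ⟨hpsd, htr⟩ := hρ
  have hH := hpsd.isHermitian
  by_cases hcard : 2 ≤ Fintype.card (Fin dA × Fin dB)
  · set lam := hH.eigenvalues with hlam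
    set e : Fin dA × Fin dB → (Fin dA × Fin dB → ℂ) := fun k => ⇑(hH.eigenvectorBasis k) with he
    have horth : ∀ k l, star (e k) ⬝ᵥ e l = if k = l then 1 else 0 := by
      intro k l
      have := orthonormal_iff_ite.1 hH.eigenvectorBasis.orthonormal k l
      rw [EuclideanSpace.inner_eq_star_dotProduct, dotProduct_comm] at this
      exact this
    have hspec : ρ = ∑ k, (lam k : ℂ) • outer (e k) := by
      have h := hH.spectral_theorem
      rw [Unitary.conjStarAlgAut_apply] at h
      rw [h]
      ext i j
      rw [Matrix.mul_apply, Matrix.sum_apply]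
      refine Finset.sum_congr rfl fun k _ => ?_
      simp [outer, Matrix.vecMulVec_apply, Matrix.mul_diagonal, he, hlam, Matrix.star_apply]
      ring
    have hc : (Finset.univ.filter fun k => lam k ≠ 0).card ≤ 2 := by
      rw [hH.rank_eq_card_non_zero_eigs, Fintype.card_subtype] at hrank
      exact hrank
    obtain ⟨t, hst, ht2⟩ := Finset.exists_superset_card_eq hc hcard
    obtain ⟨i, j, hij, rfl⟩ := Finset.card_eq_two.1 ht2
    have hz : ∀ k, k ∉ ({i, j} : Finset _) → lam k = 0 := by
      intro k hk
      by_contra hne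
      exact hk (hst (by simpa using hne))
    have hρ2 : ρ = (lam i : ℂ) • outer (e i) + (lam j : ℂ) • outer (e j) := by
      rw [hspec, ← Finset.sum_subset (Finset.subset_univ ({i, j} : Finset _)),
        Finset.sum_pair hij]
      intro k _ hk
      simp [hz k hk]
    have hto : ∀ k, (outer (e k)).trace = 1 := by
      intro k
      rw [outer, Matrix.trace_vecMulVec, dotProduct_comm, horth]; simp
    have hab : lam i + lam j = 1 := by
      rw [hρ2] at htr
      simp only [Matrix.trace_add, Matrix.trace_smul, hto, smul_eq_mul, mul_one] at htr
      exact_mod_cast htr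
    exact two_dim (e i) (e j) (by simp [horth]) (by simp [horth]) (by simp [horth, hij])
      (lam i) (lam j) (hpsd.eigenvalues_nonneg i) (hpsd.eigenvalues_nonneg j) hab ρ hρ2
  · have hss : Subsingleton (Fin dA × Fin dB) := Fintype.card_le_one_iff_subsingleton.1 (by omega)
    have hne : Nonempty (Fin dA × Fin dB) := by
      by_contra hn
      rw [not_nonempty_iff] at hn
      simp [Matrix.trace] at htr
    obtain ⟨k⟩ := hne
    have : Unique (Fin dA × Fin dB) := ⟨⟨k⟩, fun _ => Subsingleton.elim _ _⟩
    have hone : ∀ ψ : Fin dA × Fin dB → ℂ, star ψ ⬝ᵥ ψ = 1 → outer ψ = 1 := by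
      intro ψ h
      have ht : (outer ψ).trace = 1 := by
        rw [outer, Matrix.trace_vecMulVec, dotProduct_comm, h]
      ext i j
      rw [Subsingleton.elim j i, Matrix.one_apply_eq, ← ht, Matrix.trace,
        Fintype.sum_subsingleton _ i]
      rfl
    have hρ1 : ρ = 1 := by
      ext i j
      rw [Subsingleton.elim j i, Matrix.one_apply_eq, ← htr, Matrix.trace,
        Fintype.sum_subsingleton _ i]
      rfl
    have hu : star (fun _ : Fin dA × Fin dB => (1:ℂ)) ⬝ᵥ (fun _ => 1) = 1 := by
      rw [dotProduct, Fintype.sum_subsingleton _ k]; simp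
    have hd : ρ = ((1:ℝ) : ℂ) • outer (fun _ => 1) + ((1 - 1 : ℝ) : ℂ) • outer (fun _ => 1) := by
      rw [hone _ hu, hρ1]; simp
    refine ⟨1, fun _ => 1, fun _ => 1, zero_le_one, le_rfl, hu, hu, hd, ?_⟩
    apply finish ρ 1 _ _ zero_le_one le_rfl hu hu hd
    intro n p ψ hp hp1 hψ _
    simp only [pureTangle_eq_s12, hone _ hu, hone _ (hψ _), ← Finset.sum_mul, hp1]
    simp
end
end
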